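/- arXiv:1805.03038 — 3 statements merged into one kernel-verified Lean document; each statement's English description precedes it below -/
import Mathlib

section
/- Every positive integer is a sum of at most 10 squares of odd integers. -/
/-!
For `n ≥ 3` write `n = 8 * m + 3 + j` with `j ≤ 7`. Squares are `0` or `1` modulo `4`, so in a
representation of `8 * m + 3` as a sum of three squares all three are odd, and `j` further squares
`1 ^ 2` lead up to `n`.

The three squares come from Hermite's bound: completing the square shows by induction on the
dimension that a positive definite integral quadratic form takes a small nonzero value, and in
dimension at most five and determinant one that value is `1`. Splitting off a vector of norm one
repeatedly turns the form into a sum of squares. Following Dirichlet, it then suffices to find a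
positive definite ternary form of determinant one that represents `8 * m + 3`. There is one as soon
as `-d` is a square modulo `d * (8 * m + 3) - 1` for some `d > 0`. By quadratic reciprocity this
happens when `d * (8 * m + 3) - 1 = 2 * p` with `p ≡ 1 [MOD 4]` prime and `d ≡ 1 [MOD 8]`, and
Dirichlet's theorem on primes in arithmetic progressions supplies such a `p`.
-/

open Matrix

section PosDef

variable {R ι : Type*} [CommRing R] [PartialOrder R] [StarRing R] [TrivialStar R] {A : Matrix ι ι R}

theorem isSymm_of_posDef (hA : A.PosDef) : A.IsSymm := by
  simpa [IsSymm, IsHermitian] using hA.isHermitian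

theorem posDef_iff_isSymm_and_pos [Fintype ι] :
    A.PosDef ↔ A.IsSymm ∧ ∀ v ≠ 0, 0 < v ⬝ᵥ A *ᵥ v := by
  simp [posDef_iff_dotProduct_mulVec, IsHermitian, IsSymm]

end PosDef

section Condensation

variable {R : Type*} [CommRing R] {n : ℕ}

/-- Chio's pivotal condensation of `A`: the Schur complement of the corner entry `A 0 0`, scaled by
`A 0 0` so that no division is needed. For symmetric `A` it is the Gram matrix of what remains of
the quadratic form of `A`, scaled by `A 0 0`, after completing the square in the first variable. -/
def condensation (A : Matrix (Fin (n + 1)) (Fin (n + 1)) R) : Matrix (Fin n) (Fin n) R :=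
  of fun i j ↦ A 0 0 * A i.succ j.succ - A i.succ 0 * A 0 j.succ

theorem pivot_mul_det_condensation (A : Matrix (Fin (n + 1)) (Fin (n + 1)) R) :
    A 0 0 * (condensation A).det = A 0 0 ^ n * A.det := by
  let scaled : Matrix (Fin (n + 1)) (Fin (n + 1)) R :=
    of fun i j ↦ (Fin.cons 1 fun _ ↦ A 0 0 : Fin (n + 1) → R) i * A i j
  let cleared : Matrix (Fin (n + 1)) (Fin (n + 1)) R :=
    of (Fin.cons (A 0) fun i ↦ Fin.cons 0 (condensation A i))
  calc
    A 0 0 * (condensation A).det = cleared.det := by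
      have hminor : cleared.submatrix (Fin.succAbove 0) Fin.succ = condensation A := by
        ext; simp [cleared]
      rw [det_succ_column_zero, Fin.sum_univ_succ, hminor]
      simp [cleared]
    _ = scaled.det := by
      refine (det_eq_of_forall_row_eq_smul_add_const (Fin.cons 0 fun i ↦ A i.succ 0) 0
        (by simp) fun i j ↦ ?_).symm
      cases i using Fin.cases <;> cases j using Fin.cases <;>
        simp [scaled, cleared, condensation, mul_comm]
    _ = A 0 0 ^ n * A.det := by simp [scaled, det_mul_column, Fin.prod_univ_succ]

theorem isSymm_condensation {A : Matrix (Fin (n + 1)) (Fin (n + 1)) R} (hA : A.IsSymm) :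
    (condensation A).IsSymm :=
  IsSymm.ext fun i j ↦ by simp [condensation, hA.apply, mul_comm]

theorem mulVec_apply_eq_head_add_tail {m : Type*} (A : Matrix m (Fin (n + 1)) R)
    (v : Fin (n + 1) → R) (i : m) :
    (A *ᵥ v) i = A i 0 * v 0 + Fin.tail (A i) ⬝ᵥ Fin.tail v :=
  Fin.sum_univ_succ _

theorem pivot_mul_dotProduct_mulVec {A : Matrix (Fin (n + 1)) (Fin (n + 1)) R} (hA : A.IsSymm)
    (v : Fin (n + 1) → R) :
    A 0 0 * (v ⬝ᵥ A *ᵥ v) =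
      (A *ᵥ v) 0 ^ 2 + Fin.tail v ⬝ᵥ condensation A *ᵥ Fin.tail v := by
  set b := Fin.tail (A 0)
  set y := Fin.tail v
  let C := A.submatrix Fin.succ Fin.succ
  have hcond : condensation A = A 0 0 • C - vecMulVec b b := by
    ext i j
    simp [condensation, C, b, Fin.tail, vecMulVec_apply, hA.apply 0 i.succ]
  have htail : Fin.tail (A *ᵥ v) = v 0 • b + C *ᵥ y := by
    ext i
    simp only [Fin.tail, mulVec_apply_eq_head_add_tail, hA.apply 0 i.succ, mul_comm,
      Pi.add_apply, Pi.smul_apply, smul_eq_mul, b]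
    rfl
  have hdot : v ⬝ᵥ A *ᵥ v = v 0 * (A *ᵥ v) 0 + y ⬝ᵥ Fin.tail (A *ᵥ v) := Fin.sum_univ_succ _
  rw [hdot, htail, hcond, mulVec_apply_eq_head_add_tail]
  simp only [sub_mulVec, smul_mulVec, vecMulVec_mulVec, dotProduct_add, dotProduct_sub,
    dotProduct_smul, smul_eq_mul, dotProduct_comm y b, op_smul_eq_smul]
  ring

theorem exists_eq_transpose_mul_self_of_condensation
    {A : Matrix (Fin (n + 1)) (Fin (n + 1)) R} (hA : A.IsSymm) (hpivot : A 0 0 = 1)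
    {B : Matrix (Fin n) (Fin n) R} (hB : condensation A = Bᵀ * B) :
    ∃ C : Matrix (Fin (n + 1)) (Fin (n + 1)) R, A = Cᵀ * C := by
  refine ⟨of (Fin.cons (A 0) fun i ↦ Fin.cons 0 (B i)), ext fun i j ↦ ?_⟩
  rw [mul_apply, Fin.sum_univ_succ]
  cases i using Fin.cases with
  | zero => simp [hpivot]
  | succ i =>
    cases j using Fin.cases with
    | zero => simp [hpivot, hA.apply]
    | succ j =>
      have hij := congr_fun₂ hB i j
      simp only [condensation, of_apply, hpivot, one_mul, mul_apply, transpose_apply,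
        hA.apply 0 i.succ, sub_eq_iff_eq_add'] at hij
      simpa using hij

variable [LinearOrder R] [IsStrictOrderedRing R] [StarRing R] [TrivialStar R]

theorem posDef_condensation {A : Matrix (Fin (n + 1)) (Fin (n + 1)) R} (hA : A.PosDef) :
    (condensation A).PosDef := by
  have hpivot : 0 < A 0 0 := hA.diag_pos
  obtain ⟨hsymm, hpos⟩ := posDef_iff_isSymm_and_pos.mp hA
  refine posDef_iff_isSymm_and_pos.mpr ⟨isSymm_condensation hsymm, fun y hy ↦ ?_⟩
  -- The first coordinate of `v` is chosen so that the completed square vanishes at `v`.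
  let v : Fin (n + 1) → R := Fin.cons (-(Fin.tail (A 0) ⬝ᵥ y)) (A 0 0 • y)
  have hv : v ≠ 0 := fun h ↦ hy <| by
    have : A 0 0 • y = 0 := congr_arg Fin.tail h
    exact (smul_eq_zero.mp this).resolve_left hpivot.ne'
  have hzero : (A *ᵥ v) 0 = 0 := by simp [v, mulVec_apply_eq_head_add_tail]
  have hvpos := mul_pos hpivot (hpos v hv)
  rw [pivot_mul_dotProduct_mulVec hsymm, hzero] at hvpos
  simpa [v, mulVec_smul, hpivot] using hvpos

theorem posDef_of_posDef_condensation {A : Matrix (Fin (n + 1)) (Fin (n + 1)) R} (hA : A.IsSymm)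
    (hpivot : 0 < A 0 0) (hcond : (condensation A).PosDef) : A.PosDef := by
  refine posDef_iff_isSymm_and_pos.mpr ⟨hA, fun v hv ↦ pos_of_mul_pos_right ?_ hpivot.le⟩
  rw [pivot_mul_dotProduct_mulVec hA]
  obtain htail | htail := eq_or_ne (Fin.tail v) 0
  · have hv0 : v 0 ≠ 0 := fun h0 ↦ hv <| by
      rw [← Fin.cons_self_tail v, htail, h0]
      exact cons_zero_zero
    have hsq : 0 < (A 0 0 * v 0) ^ 2 := by positivity
    simpa [mulVec_apply_eq_head_add_tail, htail] using hsq
  · exact add_pos_of_nonneg_of_pos (sq_nonneg _)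
      ((posDef_iff_isSymm_and_pos.mp hcond).2 _ htail)

theorem posDef_of_det_leading_submatrix_pos {A : Matrix (Fin n) (Fin n) R} (hA : A.IsSymm)
    (hminor : ∀ (k : ℕ) (hk : k ≤ n), 0 < (A.submatrix (Fin.castLE hk) (Fin.castLE hk)).det) :
    A.PosDef := by
  induction n with
  | zero => exact posDef_iff_isSymm_and_pos.mpr ⟨hA, fun v hv ↦ absurd (Subsingleton.elim v 0) hv⟩
  | succ n ih =>
    have hpivot : 0 < A 0 0 := by simpa using hminor 1 (by omega)
    refine posDef_of_posDef_condensation hA hpivot (ih (isSymm_condensation hA) fun k hk ↦ ?_)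
    have hk' : k + 1 ≤ n + 1 := Nat.succ_le_succ hk
    have hcond : (condensation A).submatrix (Fin.castLE hk) (Fin.castLE hk) =
        condensation (A.submatrix (Fin.castLE hk') (Fin.castLE hk')) := rfl
    have hmul := pivot_mul_det_condensation (A.submatrix (Fin.castLE hk') (Fin.castLE hk'))
    rw [hcond]
    exact pos_of_mul_pos_right (hmul ▸ mul_pos (pow_pos hpivot k) (hminor (k + 1) hk')) hpivot.le

end Condensation

section UnimodularVector

theorem exists_eq_smul_dotProduct_eq_one {R ι : Type*} [CommRing R] [IsDomain R] [IsBezout R]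
    [NormalizedGCDMonoid R] [Fintype ι] {x : ι → R} (hx : x ≠ 0) :
    ∃ (d : R) (y z : ι → R), x = d • y ∧ z ⬝ᵥ y = 1 := by
  obtain ⟨i, -⟩ := Function.ne_iff.mp hx
  obtain ⟨y, hy, hgcd⟩ := Finset.univ.extract_gcd x ⟨i, Finset.mem_univ i⟩
  obtain ⟨z, hz⟩ := Finset.gcd_eq_sum_mul Finset.univ y
  refine ⟨Finset.univ.gcd x, y, z, funext fun j ↦ hy j (Finset.mem_univ j), ?_⟩
  rw [dotProduct_comm, ← hgcd, hz, dotProduct]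

variable {R : Type*} [CommRing R] [IsDomain R] [IsPrincipalIdealRing R] {n : ℕ}

theorem exists_basis_apply_zero_eq {M : Type*} [AddCommGroup M] [Module R M]
    (b : Module.Basis (Fin (n + 1)) R M) (f : M →ₗ[R] R) {y : M} (hy : f y = 1) :
    ∃ b' : Module.Basis (Fin (n + 1)) R M, b' 0 = y := by
  obtain ⟨k, c⟩ := Submodule.basisOfPid b (LinearMap.ker f)
  let c' := c.mkFinCons y
    (fun a x hx hax ↦ by simpa [hy, LinearMap.mem_ker.mp hx] using congr_arg f hax)
    (fun z ↦ ⟨-f z, by simp [hy]⟩)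
  obtain rfl : k = n := by simpa using Fintype.card_congr (c'.indexEquiv b)
  exact ⟨c', by simp [c']⟩

theorem exists_GL_mulVec_single_zero_eq {y z : Fin (n + 1) → R} (h : z ⬝ᵥ y = 1) :
    ∃ P : GL (Fin (n + 1)) R, P.val *ᵥ Pi.single 0 1 = y := by
  let e := Pi.basisFun R (Fin (n + 1))
  obtain ⟨b, hb⟩ := exists_basis_apply_zero_eq e (dotProductBilin R R z) h
  have := e.invertibleToMatrix b
  refine ⟨unitOfInvertible (e.toMatrix b), ?_⟩
  ext i
  simp [e, Module.Basis.toMatrix_apply, hb]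

end UnimodularVector

section Congruence

theorem dotProduct_transpose_mul_mul_mulVec {R m n : Type*} [CommSemiring R] [Fintype m]
    [Fintype n] (A : Matrix m m R) (P : Matrix m n R) (v : n → R) :
    v ⬝ᵥ (Pᵀ * A * P) *ᵥ v = (P *ᵥ v) ⬝ᵥ A *ᵥ (P *ᵥ v) := by
  rw [← mulVec_mulVec, ← mulVec_mulVec, dotProduct_mulVec, vecMul_transpose]

variable {ι : Type*} [Fintype ι] [DecidableEq ι]

theorem mulVec_GL_ne_zero {R : Type*} [CommRing R] (P : GL ι R) {v : ι → R} (hv : v ≠ 0) :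
    P.val *ᵥ v ≠ 0 :=
  fun h ↦ hv <| mulVec_injective_of_isUnit P.isUnit (by simpa using h)

theorem posDef_transpose_mul_mul_GL {R : Type*} [CommRing R] [PartialOrder R] [StarRing R]
    [TrivialStar R] {A : Matrix ι ι R} (hA : A.PosDef) (P : GL ι R) :
    (P.valᵀ * A * P.val).PosDef := by
  simpa using hA.conjTranspose_mul_mul_same (mulVec_injective_of_isUnit P.isUnit)

theorem det_transpose_mul_mul_GL_int (A : Matrix ι ι ℤ) (P : GL ι ℤ) :
    (P.valᵀ * A * P.val).det = A.det := by
  have hsq : P.val.det ^ 2 = 1 := Int.isUnit_sq ((isUnit_iff_isUnit_det _).mp P.isUnit)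
  rw [det_mul, det_mul, det_transpose]
  linear_combination A.det * hsq

end Congruence

section Hermite

variable {n : ℕ} {A : Matrix (Fin (n + 1)) (Fin (n + 1)) ℤ}

/-- The first standard basis vector is a shortest nonzero vector for the quadratic form of `A`. It
is the normalization under which Hermite's bound is stated. -/
def HasMinimalPivot (A : Matrix (Fin (n + 1)) (Fin (n + 1)) ℤ) : Prop :=
  ∀ v ≠ 0, A 0 0 ≤ v ⬝ᵥ A *ᵥ v

theorem exists_shortest_vector {ι : Type*} [Fintype ι] [Nonempty ι] {A : Matrix ι ι ℤ}
    (hA : A.PosDef) : ∃ x ≠ 0, ∀ v ≠ 0, x ⬝ᵥ A *ᵥ x ≤ v ⬝ᵥ A *ᵥ v := by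
  obtain ⟨x, hx, hmin⟩ := exists_minimalFor_of_wellFoundedLT (· ≠ 0)
    (fun v : ι → ℤ ↦ (v ⬝ᵥ A *ᵥ v).toNat) ⟨1, one_ne_zero⟩
  refine ⟨x, hx, fun v hv ↦ ?_⟩
  have hxpos := (posDef_iff_isSymm_and_pos.mp hA).2 x hx
  by_contra! hlt
  have : (x ⬝ᵥ A *ᵥ x).toNat ≤ (v ⬝ᵥ A *ᵥ v).toNat := hmin hv (Int.toNat_le_toNat hlt.le)
  omega

theorem exists_hasMinimalPivot (hA : A.PosDef) :
    ∃ P : GL (Fin (n + 1)) ℤ, HasMinimalPivot (P.valᵀ * A * P.val) := by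
  obtain ⟨x, hx, hmin⟩ := exists_shortest_vector hA
  obtain ⟨d, y, z, rfl, hzy⟩ := exists_eq_smul_dotProduct_eq_one hx
  obtain ⟨hd, hy⟩ := smul_ne_zero_iff.mp hx
  have hdsq : 1 ≤ d ^ 2 := (one_le_sq_iff_one_le_abs d).mpr (Int.one_le_abs hd)
  have hypos : 0 < y ⬝ᵥ A *ᵥ y := (posDef_iff_isSymm_and_pos.mp hA).2 y hy
  obtain ⟨P, hP⟩ := exists_GL_mulVec_single_zero_eq hzy
  refine ⟨P, fun v hv ↦ ?_⟩
  calc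
    (P.valᵀ * A * P.val) 0 0 = y ⬝ᵥ A *ᵥ y := by
      rw [← hP, ← dotProduct_transpose_mul_mul_mulVec]
      simp
    _ ≤ d ^ 2 * (y ⬝ᵥ A *ᵥ y) := le_mul_of_one_le_left hypos.le hdsq
    _ = (d • y) ⬝ᵥ A *ᵥ (d • y) := by
      rw [mulVec_smul, dotProduct_smul, smul_dotProduct, smul_eq_mul, smul_eq_mul]
      ring
    _ ≤ (P.val *ᵥ v) ⬝ᵥ A *ᵥ (P.val *ᵥ v) := hmin _ (mulVec_GL_ne_zero P hv)
    _ = v ⬝ᵥ (P.valᵀ * A * P.val) *ᵥ v := (dotProduct_transpose_mul_mul_mulVec ..).symm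

theorem exists_four_mul_sq_mul_add_le {a : ℤ} (ha : 0 < a) (b : ℤ) :
    ∃ t : ℤ, 4 * (a * t + b) ^ 2 ≤ a ^ 2 := by
  refine ⟨-((2 * b + a) / (2 * a)), ?_⟩
  have hlt := Int.lt_mul_ediv_self_add (x := 2 * b + a) (k := 2 * a) (by omega)
  have hle := Int.mul_ediv_self_le (x := 2 * b + a) (k := 2 * a) (by omega)
  nlinarith

theorem three_mul_pivot_sq_le (hA : A.PosDef) (hmin : HasMinimalPivot A) {y : Fin n → ℤ}
    (hy : y ≠ 0) : 3 * A 0 0 ^ 2 ≤ 4 * (y ⬝ᵥ condensation A *ᵥ y) := by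
  have hpivot : 0 < A 0 0 := hA.diag_pos
  obtain ⟨t, ht⟩ := exists_four_mul_sq_mul_add_le hpivot (Fin.tail (A 0) ⬝ᵥ y)
  let v : Fin (n + 1) → ℤ := Fin.cons t y
  have hv : v ≠ 0 := fun h ↦ hy <| congr_arg Fin.tail h
  have hle : A 0 0 * A 0 0 ≤
      (A 0 0 * t + Fin.tail (A 0) ⬝ᵥ y) ^ 2 + y ⬝ᵥ condensation A *ᵥ y :=
    calc
      A 0 0 * A 0 0 ≤ A 0 0 * (v ⬝ᵥ A *ᵥ v) := by gcongr; exact hmin v hv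
      _ = _ := by
        rw [pivot_mul_dotProduct_mulVec (isSymm_of_posDef hA), mulVec_apply_eq_head_add_tail]
        rfl
  linarith

theorem three_pow_mul_pivot_pow_le (hA : A.PosDef) (hmin : HasMinimalPivot A) :
    3 ^ (n + 1).choose 2 * A 0 0 ^ (n + 1) ≤ 4 ^ (n + 1).choose 2 * A.det := by
  induction n with
  | zero => simp
  | succ n ih =>
    have hpivot : 0 < A 0 0 := hA.diag_pos
    obtain ⟨P, hP⟩ := exists_hasMinimalPivot (posDef_condensation hA)
    have hbound := ih (posDef_transpose_mul_mul_GL (posDef_condensation hA) P) hP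
    rw [det_transpose_mul_mul_GL_int] at hbound
    set m := (P.valᵀ * condensation A * P.val) 0 0
    have hm : 3 * A 0 0 ^ 2 ≤ 4 * m := by
      have hle := three_mul_pivot_sq_le hA hmin (y := P.val *ᵥ Pi.single 0 1)
        (mulVec_GL_ne_zero P (by simp))
      rw [← dotProduct_transpose_mul_mul_mulVec] at hle
      simpa [m] using hle
    have hchoose : (n + 2).choose 2 = (n + 1) + (n + 1).choose 2 := by
      simp [Nat.choose_succ_succ' (n + 1) 1]
    refine le_of_mul_le_mul_left ?_ (pow_pos hpivot (n + 1))
    calc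
      A 0 0 ^ (n + 1) * (3 ^ (n + 2).choose 2 * A 0 0 ^ (n + 2))
      _ = 3 ^ (n + 1).choose 2 * (3 * A 0 0 ^ 2) ^ (n + 1) * A 0 0 := by rw [hchoose]; ring
      _ ≤ 3 ^ (n + 1).choose 2 * (4 * m) ^ (n + 1) * A 0 0 := by gcongr
      _ = 4 ^ (n + 1) * A 0 0 * (3 ^ (n + 1).choose 2 * m ^ (n + 1)) := by ring
      _ ≤ 4 ^ (n + 1) * A 0 0 * (4 ^ (n + 1).choose 2 * (condensation A).det) := by gcongr
      _ = 4 ^ (n + 2).choose 2 * (A 0 0 * (condensation A).det) := by rw [hchoose]; ring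
      _ = A 0 0 ^ (n + 1) * (4 ^ (n + 2).choose 2 * A.det) := by
        rw [pivot_mul_det_condensation]; ring

-- Hermite's bound `(4 / 3) ^ (n / 2)` on the pivot is smaller than `2` exactly for `n ≤ 4`.
theorem pivot_eq_one_of_det_eq_one (hn : n ≤ 4) (hA : A.PosDef) (hmin : HasMinimalPivot A)
    (hdet : A.det = 1) : A 0 0 = 1 := by
  have hpivot : 0 < A 0 0 := hA.diag_pos
  by_contra hne
  have htwo : 2 ≤ A 0 0 := by omega
  have hlt : (3 : ℤ) ^ (n + 1).choose 2 * 2 ^ (n + 1) ≤ 4 ^ (n + 1).choose 2 :=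
    calc
      _ ≤ 3 ^ (n + 1).choose 2 * A 0 0 ^ (n + 1) := by gcongr
      _ ≤ 4 ^ (n + 1).choose 2 * A.det := three_pow_mul_pivot_pow_le hA hmin
      _ = _ := by rw [hdet, mul_one]
  interval_cases n <;> norm_num [Nat.choose] at hlt

theorem exists_eq_transpose_mul_self_of_det_eq_one {n : ℕ} (hn : n ≤ 5)
    {A : Matrix (Fin n) (Fin n) ℤ} (hA : A.PosDef) (hdet : A.det = 1) :
    ∃ B : Matrix (Fin n) (Fin n) ℤ, A = Bᵀ * B := by
  induction n with
  | zero => exact ⟨0, Subsingleton.elim _ _⟩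
  | succ n ih =>
    obtain ⟨P, hmin⟩ := exists_hasMinimalPivot hA
    have hpos := posDef_transpose_mul_mul_GL hA P
    have hdet' := (det_transpose_mul_mul_GL_int A P).trans hdet
    have hpivot := pivot_eq_one_of_det_eq_one (by omega) hpos hmin hdet'
    have hcond : (condensation (P.valᵀ * A * P.val)).det = 1 := by
      simpa only [hpivot, hdet', one_mul, one_pow] using
        pivot_mul_det_condensation (P.valᵀ * A * P.val)
    obtain ⟨B, hB⟩ := ih (by omega) (posDef_condensation hpos) hcond
    obtain ⟨C, hC⟩ := exists_eq_transpose_mul_self_of_condensation (isSymm_of_posDef hpos) hpivot hB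
    refine ⟨C * P⁻¹.val, ?_⟩
    calc
      A = (P.val * P⁻¹.val)ᵀ * A * (P.val * P⁻¹.val) := by simp
      _ = P⁻¹.valᵀ * (P.valᵀ * A * P.val) * P⁻¹.val := by
        simp only [transpose_mul, Matrix.mul_assoc]
      _ = (C * P⁻¹.val)ᵀ * (C * P⁻¹.val) := by rw [hC]; simp only [transpose_mul, Matrix.mul_assoc]

end Hermite

section ThreeSquares

theorem exists_eq_sum_three_sq_of_dvd_sq_add {n d k : ℤ} (hd : 0 < d) (hdn : 1 < d * n)
    (hk : d * n - 1 ∣ k ^ 2 + d) : ∃ x : Fin 3 → ℤ, n = ∑ i, x i ^ 2 := by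
  obtain ⟨a, ha⟩ := hk
  -- The leading principal minors of `A` are `d * n - 1`, `d` and `1`.
  let A : Matrix (Fin 3) (Fin 3) ℤ := !![d * n - 1, k, 0; k, a, 1; 0, 1, n]
  have hsymm : A.IsSymm := by ext i j; fin_cases i <;> fin_cases j <;> rfl
  have hdet : A.det = 1 := by
    have hexpand : A.det = (d * n - 1) * a * n - (d * n - 1) - k * k * n := by
      simp [A, det_fin_three]
    linear_combination hexpand - n * ha
  have hpos : A.PosDef := by
    refine posDef_of_det_leading_submatrix_pos hsymm fun i hi ↦ ?_
    interval_cases i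
    · simp
    · simpa [A] using hdn
    · have hminor : (d * n - 1) * a - k * k = d := by linear_combination -ha
      simpa [A, det_fin_two, hminor] using hd
    · exact hdet.symm ▸ one_pos
  obtain ⟨B, hB⟩ := exists_eq_transpose_mul_self_of_det_eq_one (by norm_num) hpos hdet
  exact ⟨fun i ↦ B i 2, by simpa [A, mul_apply, pow_two] using congr_fun₂ hB 2 2⟩

theorem exists_two_mul_dvd_sq_sub {m : ℕ} (hm : Odd m) {a : ℤ} (ha : IsSquare (a : ZMod m)) :
    ∃ k : ℤ, (2 * m : ℤ) ∣ k ^ 2 - a := by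
  obtain ⟨x, hx⟩ : ∃ x : ℤ, (m : ℤ) ∣ x ^ 2 - a := by
    obtain ⟨y, hy⟩ := ha
    obtain ⟨x, rfl⟩ := ZMod.intCast_surjective y
    refine ⟨x, (ZMod.intCast_zmod_eq_zero_iff_dvd _ m).mp ?_⟩
    rw [Int.cast_sub, hy]; push_cast; ring
  have hm' : Odd (m : ℤ) := by exact_mod_cast hm
  have hcop : IsCoprime (2 : ℤ) m := Int.isCoprime_iff_gcd_eq_one.mpr <|
    Nat.coprime_two_left.mpr hm
  obtain heven | hodd := Int.even_or_odd (x ^ 2 - a)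
  · exact ⟨x, hcop.mul_dvd heven.two_dvd hx⟩
  · have hshift : (x + m) ^ 2 - a = x ^ 2 - a + m * (2 * x + m) := by ring
    refine ⟨x + m, hshift ▸ hcop.mul_dvd ?_ (hx.add (dvd_mul_right _ _))⟩
    exact (hodd.add_odd (hm'.mul ((even_two_mul x).add_odd hm'))).two_dvd

open NumberTheorySymbols in
theorem isSquare_neg_of_dvd_two_mul_add_one {p d : ℕ} [Fact p.Prime] (hp : p % 4 = 1)
    (hd : d % 8 = 1) (hdvd : d ∣ 2 * p + 1) : IsSquare ((-d : ℤ) : ZMod p) := by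
  have hd_odd : Odd d := Nat.odd_iff.mpr (by omega)
  have hp_odd : Odd p := Nat.odd_iff.mpr (by omega)
  have htwo : J(2 | d) = 1 := by
    rw [jacobiSym.at_two hd_odd, ZMod.χ₈_nat_mod_eight, hd]; rfl
  have htwo_mul : J(2 * p | d) = 1 := by
    have hmod : (2 * p : ℤ) ≡ -1 [ZMOD d] :=
      (Int.modEq_iff_dvd.mpr (by simpa using Int.natCast_dvd_natCast.mpr hdvd)).symm
    rw [jacobiSym.mod_left' hmod, jacobiSym.at_neg_one hd_odd,
      ZMod.χ₄_nat_one_mod_four (by omega)]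
  apply ZMod.isSquare_of_jacobiSym_eq_one
  calc
    J(-d | p) = J(d | p) := by
      rw [jacobiSym.neg _ hp_odd, ZMod.χ₄_nat_one_mod_four hp, one_mul]
    _ = J(p | d) := jacobiSym.quadratic_reciprocity_one_mod_four' hd_odd hp
    _ = J(2 * p | d) := by rw [jacobiSym.mul_left, htwo, one_mul]
    _ = 1 := htwo_mul

theorem exists_prime_dvd_two_mul_add_one {n : ℕ} (hn : n % 8 = 3) :
    ∃ p d : ℕ, p.Prime ∧ p % 4 = 1 ∧ d % 8 = 1 ∧ 2 * p + 1 = d * n := by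
  obtain ⟨m, rfl⟩ : ∃ m, n = 8 * m + 3 := ⟨n / 8, by omega⟩
  have hcop : (4 * m + 1).Coprime (4 * (8 * m + 3)) := by
    apply Nat.Coprime.mul_right
    · simp
    · rw [show 8 * m + 3 = 1 + (4 * m + 1) * 2 by ring]
      simp
  obtain ⟨p, hgt, hp, hmod⟩ := Nat.forall_exists_prime_gt_and_modEq (4 * m + 1) (by omega) hcop
  obtain ⟨j, hj⟩ := (Nat.modEq_iff_dvd' hgt.le).mp hmod.symm
  have hpj : p = 4 * ((8 * m + 3) * j) + (4 * m + 1) := by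
    rw [← mul_assoc, ← hj]
    omega
  exact ⟨p, 8 * j + 1, hp, by omega, by omega, by rw [hpj]; ring⟩

theorem exists_eq_sum_three_sq_of_mod_eight {n : ℕ} (hn : n % 8 = 3) :
    ∃ x : Fin 3 → ℤ, (n : ℤ) = ∑ i, x i ^ 2 := by
  obtain ⟨p, d, hp, hp4, hd, hpd⟩ := exists_prime_dvd_two_mul_add_one hn
  have := Fact.mk hp
  obtain ⟨k, hk⟩ := exists_two_mul_dvd_sq_sub (Nat.odd_iff.mpr (by omega))
    (isSquare_neg_of_dvd_two_mul_add_one hp4 hd ⟨n, hpd⟩)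
  have hpd' : (d * n : ℤ) - 1 = 2 * p := by
    rw [sub_eq_iff_eq_add]; exact_mod_cast hpd.symm
  apply exists_eq_sum_three_sq_of_dvd_sq_add (d := d) (k := k)
  · omega
  · have := hp.pos
    omega
  · rwa [hpd', ← sub_neg_eq_add]

end ThreeSquares

section OddSquares

theorem odd_of_sum_sq_modEq_card {ι : Type*} [Fintype ι] (hcard : Fintype.card ι < 4)
    {x : ι → ℤ} (hx : ∑ i, x i ^ 2 ≡ Fintype.card ι [ZMOD 4]) (i : ι) : Odd (x i) := by
  classical
  have hsq (a : ℤ) : a ^ 2 ≡ if Odd a then 1 else 0 [ZMOD 4] := by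
    split_ifs with ha
    · exact Int.sq_mod_four_eq_one_of_odd ha
    · obtain ⟨b, rfl⟩ := Int.not_odd_iff_even.mp ha
      exact Int.modEq_zero_iff_dvd.mpr ⟨b ^ 2, by ring⟩
  have hsum : ∑ i, x i ^ 2 ≡ (Finset.univ.filter fun i ↦ Odd (x i)).card [ZMOD 4] := by
    rw [Finset.natCast_card_filter]
    exact Int.ModEq.sum fun i _ ↦ hsq (x i)
  have hle := Finset.univ.card_filter_le fun i ↦ Odd (x i)
  have heq : (Finset.univ.filter fun i ↦ Odd (x i)).card = (Finset.univ : Finset ι).card := by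
    have := hsum.symm.trans hx
    rw [Finset.card_univ] at hle ⊢
    rw [Int.ModEq] at this
    omega
  exact Finset.card_filter_eq_iff.mp heq i (Finset.mem_univ i)

/-- `n` is a sum of exactly `k` squares of odd integers. Fixing the number of summands makes the
notion additive in `k` and `n` together. -/
def IsSumOddSq (k : ℕ) (n : ℤ) : Prop :=
  ∃ x : Fin k → ℤ, (∀ i, Odd (x i)) ∧ n = ∑ i, x i ^ 2

theorem IsSumOddSq.add {k l : ℕ} {m n : ℤ} :
    IsSumOddSq k m → IsSumOddSq l n → IsSumOddSq (k + l) (m + n) := by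
  rintro ⟨x, hx, rfl⟩ ⟨y, hy, rfl⟩
  refine ⟨Fin.append x y, fun i ↦ ?_, by simp [Fin.sum_univ_add]⟩
  cases i using Fin.addCases <;> simp [hx, hy]

theorem isSumOddSq_self (k : ℕ) : IsSumOddSq k k := ⟨1, by simp⟩

theorem isSumOddSq_three_of_mod_eight {n : ℕ} (hn : n % 8 = 3) : IsSumOddSq 3 n := by
  obtain ⟨x, hx⟩ := exists_eq_sum_three_sq_of_mod_eight hn
  refine ⟨x, odd_of_sum_sq_modEq_card (by simp) ?_, hx⟩
  rw [← hx, Fintype.card_fin, Int.ModEq]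
  omega

end OddSquares

theorem sum_of_at_most_ten_odd_squares (n : ℕ) (hn : 0 < n) :
    ∃ k : ℕ, 1 ≤ k ∧ k ≤ 10 ∧
      ∃ x : Fin k → ℤ, (∀ i, Odd (x i)) ∧ (n : ℤ) = ∑ i, (x i) ^ 2 := by
  obtain hsmall | hlarge := Nat.lt_or_ge n 3
  · exact ⟨n, hn, by omega, isSumOddSq_self n⟩
  · obtain ⟨m, j, hj, rfl⟩ : ∃ m j, j ≤ 7 ∧ n = 8 * m + 3 + j :=
      ⟨(n - 3) / 8, (n - 3) % 8, by omega, by omega⟩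
    have hthree : IsSumOddSq 3 (8 * m + 3 : ℕ) := isSumOddSq_three_of_mod_eight (by omega)
    refine ⟨3 + j, by omega, by omega, ?_⟩
    rw [Nat.cast_add]
    exact hthree.add (isSumOddSq_self j)
end

section
/- Every positive integer n with n ≡ 5 (mod 6) is represented by Ramanujan's ternary quadratic form x^2 + y^2 + 10z^2, i.e., the equation n = x^2 + y^2 + 10z^2 has an integer solution. -/
/-!
At `5`: scaled by `10`, the forms `⟨1, 1, 10⟩` and `2x² + 2y² + 2yz + 3z²` become the norm on two
sublattices of `ℤ³`, and every vector of `ℤ³` whose norm is a multiple of `10` lies, up to signs and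
order of the coordinates, in one of the two. So the genus represents `n` as soon as `10n` is a sum
of three squares.

At `3`: the two classes are neighbours. A value `≡ 2 (mod 3)` of the second form is attained, after
an automorphism over `ℤ[1/3]` of its binary part, on the sublattice the second form shares with the
first.

For odd `n` the number `m = 10n` is `2` modulo `4`, and it is a sum of three squares by Ankeny's
argument: Dirichlet's theorem gives a prime `p ≡ 1 (mod 4)` for which the pigeonhole principle
solves `m t² = x² + p y²` with `t ≠ 0`; as `p` is a sum of two squares, `m` is a sum of three
rational squares, and the Davenport–Cassels descent makes them integral.
-/

section DavenportCassels

theorem quadraticForm_smul_add_smul {R M : Type*} [CommRing R] [AddCommGroup M] [Module R M]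
    (Q : QuadraticForm R M) (r s : R) (x y : M) :
    Q (r • x + s • y) = r ^ 2 * Q x + s ^ 2 * Q y + r * s * QuadraticMap.polar Q x y := by
  rw [QuadraticMap.map_add Q, QuadraticMap.map_smul, QuadraticMap.map_smul,
    QuadraticMap.polar_smul_left, QuadraticMap.polar_smul_right]
  simp only [smul_eq_mul]
  ring

/-- If `a` is an integral vector close to `x / t`, the line through the two meets the quadric
`Q = m` again in a rational vector whose denominator divides `t' = Q (x - t • a) / t`. -/
theorem davenport_cassels {M : Type*} [AddCommGroup M] {Q : QuadraticForm ℤ M}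
    (hQ : Q.Anisotropic) (hclose : ∀ (x : M) (t : ℤ), t ≠ 0 → ∃ a, |Q (x - t • a)| < t ^ 2)
    {m t : ℤ} (ht : t ≠ 0) {x : M} (hx : Q x = m * t ^ 2) : ∃ a, Q a = m := by
  induction hN : t.natAbs using Nat.strong_induction_on generalizing t x with
  | _ N ih =>
  obtain ⟨a, ha⟩ := hclose x t ht
  set B := QuadraticMap.polar Q x a
  set t' := m * t + Q a * t - B with ht'
  have hfactor : Q (x - t • a) = t * t' := by
    have hcomb : x - t • a = (1 : ℤ) • x + (-t) • a := by module
    rw [hcomb, quadraticForm_smul_add_smul, hx, ht']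
    ring
  by_cases ht'₀ : t' = 0
  · have hxa : x = t • a := sub_eq_zero.mp (hQ _ (by rw [hfactor, ht'₀, mul_zero]))
    refine ⟨a, mul_right_cancel₀ (pow_ne_zero 2 ht) ?_⟩
    rw [← hx, hxa, QuadraticMap.map_smul, smul_eq_mul]
    ring
  · have hlt : |t'| < |t| := by
      rw [hfactor, abs_mul, ← sq_abs t, sq] at ha
      exact lt_of_mul_lt_mul_left ha (abs_nonneg t)
    refine ih t'.natAbs (by zify [← hN]; exact hlt) ht'₀
      (x := (Q a - m) • x + (2 * m * t - B) • a) ?_ rfl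
    rw [quadraticForm_smul_add_smul, hx, ht']
    ring

theorem exists_two_mul_abs_sub_mul_le (x : ℤ) {t : ℤ} (ht : t ≠ 0) :
    ∃ a : ℤ, 2 * |x - t * a| ≤ |t| := by
  refine ⟨round (x / t : ℚ), ?_⟩
  have htq : (t : ℚ) ≠ 0 := by exact_mod_cast ht
  have hround : 2 * |(x - t * round (x / t : ℚ) : ℚ)| ≤ |(t : ℚ)| :=
    calc 2 * |(x - t * round (x / t : ℚ) : ℚ)|
        = 2 * (|(t : ℚ)| * |(x / t : ℚ) - round (x / t : ℚ)|) := by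
          rw [← abs_mul, mul_sub, mul_div_cancel₀ _ htq]
      _ ≤ 2 * (|(t : ℚ)| * (1 / 2)) := by gcongr; exact abs_sub_round _
      _ = |(t : ℚ)| := by ring
  exact_mod_cast hround

theorem exists_sum_sq_eq_of_sum_sq_eq_mul_sq {ι : Type*} [Fintype ι] (hι : Fintype.card ι < 4)
    {m t : ℤ} (ht : t ≠ 0) {x : ι → ℤ} (hx : ∑ i, x i ^ 2 = m * t ^ 2) :
    ∃ a : ι → ℤ, ∑ i, a i ^ 2 = m := by
  let Q : QuadraticForm ℤ (ι → ℤ) := QuadraticMap.pi fun _ => QuadraticMap.sq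
  have hQ_apply (v : ι → ℤ) : Q v = ∑ i, v i ^ 2 := by simp [Q, sq]
  have hQ : Q.PosDef :=
    QuadraticMap.posDef_pi_iff.mpr fun _ u hu => by simpa using mul_self_pos.mpr hu
  simp only [← hQ_apply] at hx ⊢
  refine davenport_cassels hQ.anisotropic (fun v s hs => ?_) ht hx
  choose a ha using fun i => exists_two_mul_abs_sub_mul_le (v i) hs
  refine ⟨a, ?_⟩
  rw [abs_of_nonneg (hQ.nonneg _), hQ_apply]
  have hcoord (i : ι) : 4 * (v i - s * a i) ^ 2 ≤ s ^ 2 := by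
    have hsq : (2 * (v i - s * a i)) ^ 2 ≤ s ^ 2 :=
      sq_le_sq.mpr (by simpa [abs_mul] using ha i)
    linarith
  have hsum : 4 * ∑ i, (v i - s * a i) ^ 2 < 4 * s ^ 2 :=
    calc 4 * ∑ i, (v i - s * a i) ^ 2 = ∑ i, 4 * (v i - s * a i) ^ 2 := Finset.mul_sum ..
      _ ≤ ∑ _i : ι, s ^ 2 := Finset.sum_le_sum fun i _ => hcoord i
      _ = Fintype.card ι * s ^ 2 := by simp
      _ < 4 * s ^ 2 := by gcongr; exact_mod_cast hι
  simpa using hsum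

end DavenportCassels

section BoxPrinciple

variable {ι G : Type*} [Fintype ι] [AddGroup G] [Finite G]

theorem exists_ne_zero_map_eq_zero_of_card_lt (φ : (ι → ℤ) →+ G) {N : ι → ℕ}
    (hN : Nat.card G < ∏ i, (N i + 1)) : ∃ v ≠ 0, φ v = 0 ∧ ∀ i, |v i| ≤ N i := by
  classical
  have := Fintype.ofFinite G
  let box : Finset (ι → ℤ) := Fintype.piFinset fun i => Finset.Icc 0 (N i : ℤ)
  have hcard : (Finset.univ : Finset G).card < box.card := by
    simpa [box, Nat.card_eq_fintype_card] using hN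
  obtain ⟨u, hu, w, hw, hne, heq⟩ :=
    Finset.exists_ne_map_eq_of_card_lt_of_maps_to hcard fun v _ => Finset.mem_univ (φ v)
  simp only [box, Fintype.mem_piFinset, Finset.mem_Icc] at hu hw
  refine ⟨u - w, sub_ne_zero.mpr hne, by rw [map_sub, heq, sub_self], fun i => ?_⟩
  rw [Pi.sub_apply, abs_le]
  have := hu i
  have := hw i
  omega

theorem exists_ne_zero_map_eq_zero_of_card_sq_le [Nonempty ι] (φ : (ι → ℤ) →+ G) {R : ι → ℕ}
    (hR : Nat.card G ^ 2 ≤ ∏ i, R i) : ∃ v ≠ 0, φ v = 0 ∧ ∀ i, v i ^ 2 ≤ R i := by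
  have hR_pos (i : ι) : 0 < R i := by
    have hprod : ∏ i, R i ≠ 0 := ((pow_pos Nat.card_pos 2).trans_le hR).ne'
    exact Nat.pos_of_ne_zero (Finset.prod_ne_zero_iff.mp hprod i (Finset.mem_univ i))
  have hcard : Nat.card G < ∏ i, ((R i).sqrt + 1) := by
    refine lt_of_pow_lt_pow_left₀ 2 (Nat.zero_le _) (hR.trans_lt ?_)
    rw [← Finset.prod_pow]
    exact Finset.prod_lt_prod_of_nonempty (fun i _ => hR_pos i)
      (fun i _ => Nat.lt_succ_sqrt' (R i)) Finset.univ_nonempty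
  obtain ⟨v, hv, hφ, hbound⟩ := exists_ne_zero_map_eq_zero_of_card_lt φ hcard
  refine ⟨v, hv, hφ, fun i => ?_⟩
  calc v i ^ 2 ≤ ((R i).sqrt : ℤ) ^ 2 := sq_le_sq.mpr ((hbound i).trans (le_abs_self _))
    _ ≤ R i := by exact_mod_cast Nat.sqrt_le' (R i)

end BoxPrinciple

section LegendreEquation

variable {a b : ℕ}

theorem exists_small_mul_dvd_sq_add_mul_sq_sub_mul_sq (ha : a ≠ 0) (hb : b ≠ 0)
    (hab : a.Coprime b) (hb_sq : IsSquare (b : ZMod a)) (ha_sq : IsSquare (-a : ZMod b)) :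
    ∃ x y z : ℤ, (x ≠ 0 ∨ y ≠ 0 ∨ z ≠ 0) ∧ x ^ 2 ≤ a * b ∧ y ^ 2 ≤ b ∧ z ^ 2 ≤ a ∧
      (a * b : ℤ) ∣ x ^ 2 + a * y ^ 2 - b * z ^ 2 := by
  have : NeZero a := ⟨ha⟩
  have : NeZero b := ⟨hb⟩
  obtain ⟨s, hs⟩ := hb_sq
  obtain ⟨r, hr⟩ := ha_sq
  let φ : (Fin 3 → ℤ) →+ ZMod a × ZMod b :=
    AddMonoidHom.mk' (fun v => (v 0 - s * v 2, v 0 - r * v 1)) fun v w => by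
      ext <;> simp only [Pi.add_apply, Int.cast_add, Prod.mk_add_mk] <;> ring
  have hcard : Nat.card (ZMod a × ZMod b) ^ 2 = ∏ i, ![a * b, b, a] i := by
    simp only [Nat.card_prod, Nat.card_zmod, Fin.prod_univ_three, Matrix.cons_val]
    ring
  obtain ⟨v, hv, hφ, hbound⟩ := exists_ne_zero_map_eq_zero_of_card_sq_le φ hcard.le
  obtain ⟨hφa, hφb⟩ : (v 0 - s * v 2 : ZMod a) = 0 ∧ (v 0 - r * v 1 : ZMod b) = 0 :=
    Prod.mk.inj hφ
  refine ⟨v 0, v 1, v 2, ?_, by simpa using hbound 0, by simpa using hbound 1,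
    by simpa using hbound 2, (Nat.isCoprime_iff_coprime.mpr hab).mul_dvd ?_ ?_⟩
  · by_contra! hzero
    exact hv (by ext i; fin_cases i <;> simp [hzero])
  · rw [← ZMod.intCast_zmod_eq_zero_iff_dvd]
    push_cast
    rw [ZMod.natCast_self, hs]
    linear_combination (v 0 + s * v 2 : ZMod a) * hφa
  · rw [← ZMod.intCast_zmod_eq_zero_iff_dvd]
    push_cast
    rw [ZMod.natCast_self]
    linear_combination (v 0 + r * v 1 : ZMod b) * hφb - (v 1 : ZMod b) ^ 2 * hr

theorem isSquare_of_mul_sq_eq_sq {x y : ℤ} (hy : y ≠ 0) (h : a * y ^ 2 = x ^ 2) :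
    IsSquare a := by
  obtain ⟨c, rfl⟩ : y ∣ x := (Int.pow_dvd_pow_iff two_ne_zero).mp (Dvd.intro_left _ h)
  have hac : (a : ℤ) = c * c := mul_right_cancel₀ (pow_ne_zero 2 hy) (by rw [h]; ring)
  exact Int.isSquare_natCast_iff.mp ⟨c, hac⟩

theorem exists_sq_add_mul_sq_sub_mul_sq_eq_zero_or_eq_mul (ha : ¬IsSquare a) (hab : a.Coprime b)
    (hb_sq : IsSquare (b : ZMod a)) (ha_sq : IsSquare (-a : ZMod b)) :
    ∃ x y z : ℤ, (x ≠ 0 ∨ y ≠ 0 ∨ z ≠ 0) ∧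
      (x ^ 2 + a * y ^ 2 - b * z ^ 2 = 0 ∨ x ^ 2 + a * y ^ 2 - b * z ^ 2 = a * b) := by
  have ha₀ : a ≠ 0 := by
    rintro rfl
    exact ha .zero
  have hb : b ≠ 0 := by
    rintro rfl
    exact ha (a.coprime_zero_right.mp hab ▸ .one)
  obtain ⟨x, y, z, hne, hx, hy, hz, k, hk⟩ :=
    exists_small_mul_dvd_sq_add_mul_sq_sub_mul_sq ha₀ hb hab hb_sq ha_sq
  have ha_pos : (0 : ℤ) < a := by positivity
  have hb_pos : (0 : ℤ) < b := by positivity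
  have hab_pos : (0 : ℤ) < a * b := mul_pos ha_pos hb_pos
  have hlower : -1 < k := by
    have hz_lt : z ^ 2 < a := hz.lt_of_ne fun h =>
      ha (isSquare_of_mul_sq_eq_sq one_ne_zero (by rw [h]; ring))
    have : a * b * (-1) < a * b * k := by
      nlinarith [sq_nonneg x, mul_nonneg ha_pos.le (sq_nonneg y)]
    exact lt_of_mul_lt_mul_left this hab_pos.le
  have hupper : k < 2 := by
    by_contra! hk₂
    have hge : a * b * 2 ≤ a * b * k := by gcongr
    have hay : a * y ^ 2 ≤ a * b := by gcongr
    have hbz : 0 ≤ b * z ^ 2 := by positivity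
    have hy_eq : y ^ 2 = b := mul_left_cancel₀ ha_pos.ne' (by linarith)
    refine ha (isSquare_of_mul_sq_eq_sq (x := x) (y := y) ?_ (by linarith))
    rintro rfl
    exact hb_pos.ne (by simpa using hy_eq)
  refine ⟨x, y, z, hne, ?_⟩
  obtain rfl | rfl : k = 0 ∨ k = 1 := by omega
  · exact .inl (by linarith)
  · exact .inr (by linarith)

theorem exists_sq_add_mul_sq_eq_mul_sq (ha : ¬IsSquare a) (hab : a.Coprime b)
    (hb_sq : IsSquare (b : ZMod a)) (ha_sq : IsSquare (-a : ZMod b)) :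
    ∃ x y z : ℤ, z ≠ 0 ∧ x ^ 2 + a * y ^ 2 = b * z ^ 2 := by
  have ha_pos : 0 < a := by
    rw [Nat.pos_iff_ne_zero]
    rintro rfl
    exact ha .zero
  obtain ⟨x, y, z, hne, h₀ | hab_eq⟩ :=
    exists_sq_add_mul_sq_sub_mul_sq_eq_zero_or_eq_mul ha hab hb_sq ha_sq
  · refine ⟨x, y, z, ?_, by linarith⟩
    rintro rfl
    have hx : x = 0 := by nlinarith [mul_nonneg (Int.natCast_nonneg a) (sq_nonneg y)]
    simp_all
  · -- Here `x² + a y² = b (z² + a)`; multiply by `z² + a` and use Brahmagupta's identity.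
    refine ⟨x * z + a * y, x - y * z, z ^ 2 + a, by positivity, ?_⟩
    linear_combination (z ^ 2 + a) * hab_eq

end LegendreEquation

section ThreeSquares

theorem exists_prime_add_one_eq_mul_of_even {m : ℕ} (hm : Even m) (hm₀ : m ≠ 0) :
    ∃ p d : ℕ, p.Prime ∧ p ≠ 2 ∧ p + 1 = m * d ∧ d % 4 = 1 := by
  obtain ⟨k, rfl⟩ := Nat.exists_eq_succ_of_ne_zero hm₀
  have hk : Nat.Coprime k (2 ^ 2) := by
    refine Nat.Coprime.pow_right 2 (Nat.coprime_two_right.mpr ?_)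
    rwa [Nat.succ_eq_add_one, Nat.even_add_one, Nat.not_even_iff_odd] at hm
  have hcoprime : k.Coprime ((k + 1) * 4) := Nat.Coprime.mul_right (by simp) hk
  obtain ⟨p, hp_gt, hp, hmod⟩ :=
    Nat.forall_exists_prime_gt_and_modEq 2 (by positivity) hcoprime
  have hmod' : p + 1 ≡ (k + 1) * 1 [MOD (k + 1) * 4] := by simpa using hmod.add_right 1
  obtain ⟨d, hd⟩ : k + 1 ∣ p + 1 :=
    (hmod'.dvd_iff (dvd_mul_right _ _)).mpr (dvd_mul_right _ _)
  rw [hd] at hmod'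
  exact ⟨p, d, hp, hp_gt.ne', hd, hmod'.mul_left_cancel' (by positivity)⟩

theorem isSquare_of_prime_add_one_eq_mul {p m d : ℕ} (hp : p.Prime) (hp₂ : p ≠ 2)
    (hpmd : p + 1 = m * d) (hd : d % 4 = 1) : IsSquare (m : ZMod p) := by
  have : Fact p.Prime := ⟨hp⟩
  have hpmd' : (p : ℤ) + 1 = m * d := by exact_mod_cast hpmd
  have hd_p : jacobiSym d p = 1 :=
    calc jacobiSym d p = jacobiSym p d :=
          jacobiSym.quadratic_reciprocity_one_mod_four hd (hp.odd_of_ne_two hp₂)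
      _ = jacobiSym (-1) d :=
          jacobiSym.mod_left' (Int.modEq_iff_dvd.mpr ⟨-m, by linear_combination -hpmd'⟩)
      _ = 1 := by
          rw [jacobiSym.at_neg_one (Nat.odd_iff.mpr (by omega)), ZMod.χ₄_nat_one_mod_four hd]
  have hmd_p : jacobiSym (m * d) p = 1 := by
    rw [← hpmd', jacobiSym.mod_left' (Int.add_modEq_left : (p + 1 : ℤ) ≡ 1 [ZMOD p]),
      jacobiSym.one_left]
  rw [jacobiSym.mul_left, hd_p, mul_one] at hmd_p
  simpa using ZMod.isSquare_of_jacobiSym_eq_one hmd_p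

theorem exists_sum_three_sq_of_mod_four_eq_two {m : ℕ} (hm : m % 4 = 2) :
    ∃ a b c : ℤ, a ^ 2 + b ^ 2 + c ^ 2 = m := by
  obtain ⟨p, d, hp, hp₂, hpmd, hd⟩ :=
    exists_prime_add_one_eq_mul_of_even (Nat.even_iff.mpr (by omega : m % 2 = 0)) (by omega)
  have hp₄ : p % 4 = 1 := by
    have : (p + 1) % 4 = 2 := by rw [hpmd, Nat.mul_mod, hm, hd]
    omega
  have : Fact p.Prime := ⟨hp⟩
  have hcoprime : p.Coprime m :=
    Nat.Coprime.coprime_mul_right_right (hpmd ▸ Nat.coprime_self_add_right.mpr (by simp))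
  have hneg_p : (-p : ZMod m) = 1 := by
    have : ((p + 1 : ℕ) : ZMod m) = 0 := by simp [hpmd]
    push_cast at this
    linear_combination -this
  obtain ⟨x, y, t, ht, hxyt⟩ := exists_sq_add_mul_sq_eq_mul_sq hp.prime.not_isSquare
    hcoprime (isSquare_of_prime_add_one_eq_mul hp hp₂ hpmd hd) (hneg_p ▸ .one)
  obtain ⟨u, v, huv⟩ := Nat.Prime.sq_add_sq (p := p) (by omega)
  have hrat : ∑ i, ![x, u * y, v * y] i ^ 2 = m * t ^ 2 := by
    rw [← hxyt, ← huv]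
    simp only [Fin.sum_univ_three, Matrix.cons_val]
    push_cast
    ring
  obtain ⟨a, ha⟩ := exists_sum_sq_eq_of_sum_sq_eq_mul_sq (by simp) ht hrat
  exact ⟨a 0, a 1, a 2, by rw [← ha, Fin.sum_univ_three]⟩

end ThreeSquares

section Genus

/-- Ramanujan's ternary form `⟨1, 1, 10⟩`. -/
def ramanujanForm (x y z : ℤ) : ℤ := x ^ 2 + y ^ 2 + 10 * z ^ 2

/-- The binary form `[2, 2, 3]`, representing the non-principal class of discriminant `-20`. -/
def binaryForm (y z : ℤ) : ℤ := 2 * y ^ 2 + 2 * y * z + 3 * z ^ 2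

/-- The form `⟨2⟩ ⊥ [2, 2, 3]`, representing the second class in the genus of `ramanujanForm`. -/
def genusMate (x y z : ℤ) : ℤ := 2 * x ^ 2 + binaryForm y z

theorem five_dvd_of_five_dvd_sum_three_sq {a b c : ℤ} (h : 5 ∣ a ^ 2 + b ^ 2 + c ^ 2) :
    5 ∣ a ∨ 5 ∣ b ∨ 5 ∣ c := by
  have hmod : ∀ x y z : ZMod 5, x ^ 2 + y ^ 2 + z ^ 2 = 0 → x = 0 ∨ y = 0 ∨ z = 0 := by decide
  have key := hmod a b c
  norm_cast at key
  simpa only [ZMod.intCast_zmod_eq_zero_iff_dvd, Nat.cast_ofNat] using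
    key ((ZMod.intCast_zmod_eq_zero_iff_dvd _ 5).mpr h)

theorem five_dvd_sub_or_add_of_five_dvd_sum_two_sq {a b : ℤ} (h : 5 ∣ a ^ 2 + b ^ 2) :
    5 ∣ b - 2 * a ∨ 5 ∣ b + 2 * a := by
  refine (show Prime (5 : ℤ) by norm_num).dvd_or_dvd ?_
  rw [show (b - 2 * a) * (b + 2 * a) = a ^ 2 + b ^ 2 - 5 * a ^ 2 by ring]
  exact h.sub (dvd_mul_right _ _)

theorem exists_ramanujanForm_eq_of_ten_dvd {n a b c : ℤ} (h : a ^ 2 + b ^ 2 + c ^ 2 = 10 * n)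
    (hc : 10 ∣ c) : ∃ x y z, ramanujanForm x y z = n := by
  obtain ⟨z, rfl⟩ := hc
  have hparity : Even (a + b) := by
    have : Even (a ^ 2 + b ^ 2) := ⟨5 * n - 50 * z ^ 2, by linarith⟩
    simpa [parity_simps] using this
  wlog hab : 5 ∣ b - 2 * a generalizing a
  · refine this (a := -a) (by rwa [neg_sq]) (by simpa [parity_simps] using hparity) ?_
    have := five_dvd_sub_or_add_of_five_dvd_sum_two_sq (a := a) (b := b)
      ⟨2 * n - 20 * z ^ 2, by linarith⟩
    omega
  obtain ⟨x, hx⟩ : 10 ∣ 3 * a + b := by grind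
  obtain ⟨y, hy⟩ : 10 ∣ a - 3 * b := by grind
  obtain rfl : a = 3 * x + y := by omega
  obtain rfl : b = x - 3 * y := by omega
  exact ⟨x, y, z, by rw [ramanujanForm]; linarith⟩

theorem exists_genusMate_eq_of_even_of_five_dvd {n a b c : ℤ}
    (h : a ^ 2 + b ^ 2 + c ^ 2 = 10 * n) (hc : Even c) (ha : 5 ∣ a) :
    ∃ x y z, genusMate x y z = n := by
  obtain ⟨z, rfl⟩ := ha
  have hparity : Even (z + b) := by
    have : Even ((5 * z) ^ 2 + b ^ 2 + c ^ 2) := ⟨5 * n, by linarith⟩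
    simpa [parity_simps, hc, show ¬Even (5 : ℤ) by decide] using this
  wlog hbc : 5 ∣ c + 2 * b generalizing b
  · refine this (b := -b) (by rwa [neg_sq]) (by simpa [parity_simps] using hparity) ?_
    have := five_dvd_sub_or_add_of_five_dvd_sum_two_sq (a := b) (b := c)
      ⟨2 * n - 5 * z ^ 2, by linarith⟩
    omega
  obtain ⟨x, hx⟩ : 10 ∣ c + 2 * b := by grind
  obtain ⟨w, hw⟩ : 5 ∣ 2 * c - b := by omega
  obtain ⟨y, hy⟩ : 2 ∣ w - z := by grind
  obtain rfl : w = z + 2 * y := by omega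
  obtain rfl : c = 2 * x + 2 * (z + 2 * y) := by omega
  obtain rfl : b = 4 * x - (z + 2 * y) := by omega
  exact ⟨x, y, z, by rw [genusMate, binaryForm]; linarith⟩

theorem ramanujanForm_or_genusMate_of_sum_three_sq {n a b c : ℤ}
    (h : a ^ 2 + b ^ 2 + c ^ 2 = 10 * n) :
    (∃ x y z, ramanujanForm x y z = n) ∨ ∃ x y z, genusMate x y z = n := by
  wlog hc : Even c generalizing a b c
  · have hsum : Even (a ^ 2 + b ^ 2 + c ^ 2) := ⟨5 * n, by linarith⟩
    by_cases ha : Even a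
    · exact this (a := c) (b := b) (c := a) (by linarith) ha
    · refine this (a := a) (b := c) (c := b) (by linarith) ?_
      simp only [Int.even_add, Int.even_pow, ne_eq, OfNat.ofNat_ne_zero, not_false_eq_true,
        and_true] at hsum
      tauto
  obtain ha | hb | hc₅ := five_dvd_of_five_dvd_sum_three_sq ⟨2 * n, by rw [h]; ring⟩
  · exact .inr (exists_genusMate_eq_of_even_of_five_dvd h hc ha)
  · exact .inr (exists_genusMate_eq_of_even_of_five_dvd (b := a) (by linarith) hc hb)
  · exact .inl (exists_ramanujanForm_eq_of_ten_dvd h (by grind))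

/-- The form is half the norm of `2y + z(1 + √-5)`, and `2 ± √-5` has norm `9`. -/
theorem exists_binaryForm_eq_nine_mul_not_three_dvd {y z : ℤ} (h : ¬(3 ∣ y ∧ 3 ∣ z)) :
    ∃ u v, binaryForm u v = 9 * binaryForm y z ∧ ¬(3 ∣ u ∧ 3 ∣ v) := by
  by_cases hy : 3 ∣ y
  · exact ⟨3 * y + 3 * z, -2 * y + z, by simp only [binaryForm]; ring, by omega⟩
  · exact ⟨y - 3 * z, 2 * y + 3 * z, by simp only [binaryForm]; ring, by omega⟩

theorem exists_binaryForm_eq_not_three_dvd {y z : ℤ} (hyz : y ≠ 0 ∨ z ≠ 0) :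
    ∃ u v, binaryForm u v = binaryForm y z ∧ ¬(3 ∣ u ∧ 3 ∣ v) := by
  induction hN : y.natAbs + z.natAbs using Nat.strong_induction_on generalizing y z with
  | _ N ih =>
  by_cases hdvd : 3 ∣ y ∧ 3 ∣ z
  · obtain ⟨⟨y, rfl⟩, ⟨z, rfl⟩⟩ := hdvd
    obtain ⟨u, v, huv, h_uv⟩ := ih (y.natAbs + z.natAbs) (by omega) (by omega) rfl
    obtain ⟨u', v', huv', h_uv'⟩ := exists_binaryForm_eq_nine_mul_not_three_dvd h_uv
    exact ⟨u', v', by rw [huv', huv]; simp only [binaryForm]; ring, h_uv'⟩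
  · exact ⟨y, z, rfl, hdvd⟩

theorem genusMate_neg_left (x y z : ℤ) : genusMate (-x) y z = genusMate x y z := by
  simp [genusMate]

theorem genusMate_add_three_mul (y z k : ℤ) :
    genusMate (z + 3 * k) y z = ramanujanForm (2 * z + 2 * k + y) (z + 2 * k - y) k := by
  simp only [genusMate, binaryForm, ramanujanForm]
  ring

theorem three_dvd_sub_or_add_of_genusMate_emod_three {x y z : ℤ} (h : genusMate x y z % 3 = 2)
    (hyz : ¬(3 ∣ y ∧ 3 ∣ z)) : 3 ∣ x - z ∨ 3 ∣ x + z := by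
  have hmod : ∀ x y z : ZMod 3, 2 * x ^ 2 + (2 * y ^ 2 + 2 * y * z + 3 * z ^ 2) = 2 →
      ¬(y = 0 ∧ z = 0) → x - z = 0 ∨ x + z = 0 := by decide
  have h' : (genusMate x y z : ZMod 3) = 2 :=
    (ZMod.intCast_eq_intCast_iff _ 2 3).mpr h
  simp only [genusMate, binaryForm] at h'
  have key := hmod x y z
  norm_cast at key h'
  simp only [ZMod.intCast_zmod_eq_zero_iff_dvd, Nat.cast_ofNat] at key
  exact key h' hyz

theorem exists_ramanujanForm_eq_genusMate {x y z : ℤ} (h : genusMate x y z % 3 = 2) :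
    ∃ a b c, ramanujanForm a b c = genusMate x y z := by
  by_cases hyz : y ≠ 0 ∨ z ≠ 0
  · obtain ⟨u, v, huv, h_uv⟩ := exists_binaryForm_eq_not_three_dvd hyz
    have hmate : genusMate x y z = genusMate x u v := by rw [genusMate, ← huv, genusMate]
    rw [hmate] at h ⊢
    obtain ⟨k, hk⟩ | ⟨k, hk⟩ := three_dvd_sub_or_add_of_genusMate_emod_three h h_uv
    · rw [show x = v + 3 * k by linarith, genusMate_add_three_mul]
      exact ⟨_, _, _, rfl⟩
    · rw [← genusMate_neg_left, show -x = v + 3 * -k by linarith, genusMate_add_three_mul]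
      exact ⟨_, _, _, rfl⟩
  · obtain ⟨rfl, rfl⟩ : y = 0 ∧ z = 0 := by simpa using hyz
    exact ⟨x, x, 0, by simp only [ramanujanForm, genusMate, binaryForm]; ring⟩

end Genus

theorem five_mod_six_rep_ramanujan (n : ℕ) (hn : 0 < n) (h : n % 6 = 5) :
    ∃ x y z : ℤ, (n : ℤ) = x ^ 2 + y ^ 2 + 10 * z ^ 2 := by
  suffices ∃ x y z, ramanujanForm x y z = n by simpa only [ramanujanForm, eq_comm] using this
  obtain ⟨a, b, c, habc⟩ := exists_sum_three_sq_of_mod_four_eq_two (m := 10 * n) (by omega)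
  obtain hform | ⟨x, y, z, hmate⟩ :=
    ramanujanForm_or_genusMate_of_sum_three_sq (n := n) (by exact_mod_cast habc)
  · exact hform
  · rw [← hmate]
    exact exists_ramanujanForm_eq_genusMate (by omega)
end

section
/- For any prime p ≠ 2, 3, 5, 17 and any positive integer n represented by f = ⟨1,1,10⟩ such that p^2·n is represented by f, we have r(p^2·n, f) > r(n, f). -/
/-- The number of representations of m by Ramanujan's ternary form x² + y² + 10z². -/
noncomputable def ramanujanRepCount (m : ℤ) : ℕ :=
  Set.ncard {v : ℤ × ℤ × ℤ | v.1 ^ 2 + v.2.1 ^ 2 + 10 * v.2.2 ^ 2 = m}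

/-! The multiplication by `p` embeds the representations of `n` into those of `p ^ 2 * n`, so it is
enough to find a representation of `p ^ 2 * n` that is not divisible by `p`.

Write the form as `|ξ|² + 10z²` with `ξ` a Gaussian integer. Whenever `p = m₁|α|² + m₂|β|²` with
`m₁m₂ = 10`, an explicit similitude of multiplier `p ^ 2` sends a representation of `n` to one of
`p ^ 2 * n`. Changing `β` by a unit yields several such similitudes, and a vector whose images are
all divisible by `p` is itself divisible by `p`; descent on `n` then removes the latter case.

That `p` is represented by `|α|² + 10|β|²` or `2|α|² + 5|β|²` follows from the three-squares
theorem: if `5m` is a sum of three squares then `m = x² + y² + 5z²`, so taking `m = p - 5w²` gives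
`p = |γ|² + 5|δ|²`, and as `p` is odd exactly one of `γ`, `δ` is divisible by `1 + i`. The
three-squares theorem itself is proved by Dirichlet's argument: `n` is a value of an explicit
positive ternary form of determinant one, and every such form is a sum of three squares of integral
linear forms. -/

open Matrix
open scoped NumberTheorySymbols

local notation "ℤ[i]" => GaussianInt

/-! ### Positive ternary forms of determinant one -/

theorem exists_two_mul_abs_sub_mul_le_s12 {a : ℤ} (ha : 0 < a) (b : ℤ) :
    ∃ k : ℤ, 2 * |b - k * a| ≤ a := by
  refine ⟨(2 * b + a) / (2 * a), ?_⟩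
  have hle := Int.ediv_mul_le (2 * b + a) (b := 2 * a) (by omega)
  have hlt := Int.lt_ediv_add_one_mul_self (2 * b + a) (b := 2 * a) (by omega)
  have : |2 * (b - (2 * b + a) / (2 * a) * a)| ≤ a := abs_le.mpr ⟨by linarith, by linarith⟩
  simpa [abs_mul] using this

theorem exists_isCoprime_three_mul_sq_le {a b c : ℤ} (ha : 0 < a) (hdisc : 0 < a * c - b ^ 2) :
    ∃ p q : ℤ, IsCoprime p q ∧
      3 * (a * p ^ 2 + 2 * b * p * q + c * q ^ 2) ^ 2 ≤ 4 * (a * c - b ^ 2) := by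
  induction hN : a.toNat using Nat.strong_induction_on generalizing a b c with
  | _ N ih =>
    obtain ⟨k, hk⟩ := exists_two_mul_abs_sub_mul_le_s12 ha b
    set b' := b - k * a with hb'
    set c' := c - 2 * k * b + k ^ 2 * a with hc'
    have hdisc' : a * c' - b' ^ 2 = a * c - b ^ 2 := by rw [hb', hc']; ring
    rcases lt_or_ge c' a with hlt | hle
    · have hc'pos : 0 < c' := pos_of_mul_pos_right (by linarith [sq_nonneg b']) ha.le
      obtain ⟨p, q, hpq, hle⟩ := ih _ (by omega) hc'pos (b := -b') (c := a) (by linarith) rfl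
      refine ⟨q + k * p, -p, ?_, ?_⟩
      · simpa using (hpq.symm.add_mul_right_left k).neg_right
      · calc
          _ = 3 * (c' * p ^ 2 + 2 * -b' * p * q + a * q ^ 2) ^ 2 := by rw [hb', hc']; ring
          _ ≤ _ := hle
          _ = _ := by rw [← hdisc']; ring
    · refine ⟨1, 0, isCoprime_one_left, ?_⟩
      have hb'sq : (2 * |b'|) ^ 2 ≤ a ^ 2 := pow_le_pow_left₀ (by positivity) hk 2
      rw [mul_pow, sq_abs] at hb'sq
      nlinarith

theorem mul_diag_sub_sq_pos_of_posDef {n R : Type*} [CommRing R] [LinearOrder R]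
    [IsStrictOrderedRing R] [StarRing R] [TrivialStar R] {M : Matrix n n R} (hM : M.PosDef)
    {i j : n} (hij : i ≠ j) :
    0 < M i i * M j j - M i j ^ 2 := by
  have hsymm : M j i = M i j := by simpa using hM.isHermitian.apply i j
  have hpos : 0 < M i i := hM.diag_pos
  have hN := hM.submatrix (e := ![i, j]) (List.nodup_ofFn.mp (by simpa using hij))
  have hx : ![-M i j, M i i] ≠ 0 := fun h => hpos.ne' (congrFun h 1)
  have hvalue := hN.dotProduct_mulVec_pos hx
  have : 0 < M i i * (M i i * M j j - M i j ^ 2) := by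
    convert hvalue using 1
    simp only [mulVec, dotProduct, Fin.sum_univ_two, star_trivial, submatrix_apply, cons_val, hsymm]
    ring
  exact pos_of_mul_pos_right this hpos.le

theorem exists_eq_transpose_mul_self_of_congr {n R : Type*} [Fintype n] [DecidableEq n]
    [CommRing R] {M U : Matrix n n R} (hU : IsUnit U.det) (h : ∃ T, Uᵀ * M * U = Tᵀ * T) :
    ∃ T, M = Tᵀ * T := by
  obtain ⟨T, hT⟩ := h
  refine ⟨T * U⁻¹, ?_⟩
  calc
    M = (U * U⁻¹)ᵀ * M * (U * U⁻¹) := by simp [mul_nonsing_inv _ hU]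
    _ = (U⁻¹)ᵀ * (Uᵀ * M * U) * U⁻¹ := by simp only [transpose_mul, Matrix.mul_assoc]
    _ = (T * U⁻¹)ᵀ * (T * U⁻¹) := by simp only [hT, transpose_mul, Matrix.mul_assoc]

theorem exists_det_eq_one_hermite_bounds {M : Matrix (Fin 3) (Fin 3) ℤ} (hM : M.PosDef)
    (hdet : 0 < M.det) : ∃ U : Matrix (Fin 3) (Fin 3) ℤ, U.det = 1 ∧
      (Uᵀ * M * U) 0 0 = M 0 0 ∧ 2 * |(Uᵀ * M * U) 0 1| ≤ M 0 0 ∧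
      3 * (M 0 0 * (Uᵀ * M * U) 1 1 - (Uᵀ * M * U) 0 1 ^ 2) ^ 2 ≤ 4 * (M 0 0 * M.det) := by
  have h10 : M 1 0 = M 0 1 := by simpa using hM.isHermitian.apply 0 1
  have h20 : M 2 0 = M 0 2 := by simpa using hM.isHermitian.apply 0 2
  have h21 : M 2 1 = M 1 2 := by simpa using hM.isHermitian.apply 1 2
  have hpos : 0 < M 0 0 := hM.diag_pos
  -- The binary form `M 0 0 * M(X, p, q) - (M 0 0 * X + M 0 1 * p + M 0 2 * q) ^ 2` in `(p, q)` has
  -- discriminant `M 0 0 * M.det`.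
  have hdisc : (M 0 0 * M 1 1 - M 0 1 ^ 2) * (M 0 0 * M 2 2 - M 0 2 ^ 2)
      - (M 0 0 * M 1 2 - M 0 1 * M 0 2) ^ 2 = M 0 0 * M.det := by
    rw [det_fin_three, h10, h20, h21]
    ring
  obtain ⟨p, q, ⟨s, r, hpq⟩, hle⟩ := exists_isCoprime_three_mul_sq_le
    (mul_diag_sub_sq_pos_of_posDef hM (by decide)) (hdisc ▸ mul_pos hpos hdet)
  obtain ⟨k, hk⟩ := exists_two_mul_abs_sub_mul_le_s12 hpos (M 0 1 * p + M 0 2 * q)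
  refine ⟨!![1, -k, 0; 0, p, -r; 0, q, s], ?_, ?_, ?_, ?_⟩
  · simp only [det_fin_three, of_apply, cons_val]
    linear_combination hpq
  · simp [Matrix.mul_apply, Fin.sum_univ_three]
  · convert hk using 3
    simp only [Matrix.mul_apply, Fin.sum_univ_three, transpose_apply, of_apply, cons_val]
    ring
  · rw [hdisc] at hle
    convert hle using 3
    simp only [Matrix.mul_apply, Fin.sum_univ_three, transpose_apply, of_apply, cons_val, h10, h20,
      h21]
    ring

theorem eq_one_of_reduced {a b d : ℤ} (ha : 0 < a) (hb : 2 * |b| ≤ a) (had : a ≤ d)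
    (hle : 3 * (a * d - b ^ 2) ^ 2 ≤ 4 * a) : a = 1 ∧ b = 0 ∧ d = 1 := by
  have hb2 : (2 * b) ^ 2 ≤ a ^ 2 := sq_le_sq.mpr (by simpa [abs_mul, abs_of_pos ha] using hb)
  have hlow : 3 * a ^ 2 ≤ 4 * (a * d - b ^ 2) := by nlinarith
  have hcube : 27 * a ^ 3 ≤ 64 := by
    have h := pow_le_pow_left₀ (by positivity) hlow 2
    exact le_of_mul_le_mul_right (by linarith) ha
  have ha1 : a = 1 := by
    by_contra hne
    have : 2 ^ 3 ≤ a ^ 3 := pow_le_pow_left₀ (by norm_num) (by omega) 3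
    omega
  subst ha1
  obtain rfl : b = 0 := Int.abs_lt_one_iff.mp (by omega)
  refine ⟨rfl, rfl, ?_⟩
  nlinarith only [hle, had]

theorem exists_eq_transpose_mul_self_of_apply_eq {R : Type*} [CommRing R]
    {M : Matrix (Fin 3) (Fin 3) R} (hM : M.IsSymm) (hdet : M.det = 1) (h00 : M 0 0 = 1)
    (h01 : M 0 1 = 0) (h11 : M 1 1 = 1) : ∃ T, M = Tᵀ * T := by
  have h10 : M 1 0 = 0 := (hM.apply 0 1).trans h01
  have h20 : M 2 0 = M 0 2 := hM.apply 0 2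
  have h21 : M 2 1 = M 1 2 := hM.apply 1 2
  have h22 : M 2 2 = M 0 2 * M 0 2 + M 1 2 * M 1 2 + 1 := by
    rw [det_fin_three, h00, h01, h11, h10, h20, h21] at hdet
    linear_combination hdet
  refine ⟨!![1, 0, M 0 2; 0, 1, M 1 2; 0, 0, 1], ?_⟩
  ext i j
  fin_cases i <;> fin_cases j <;>
    simp [Matrix.mul_apply, Fin.sum_univ_three, h00, h01, h11, h10, h20, h21, h22]

theorem exists_eq_transpose_mul_self {M : Matrix (Fin 3) (Fin 3) ℤ} (hM : M.PosDef)
    (hdet : M.det = 1) : ∃ T : Matrix (Fin 3) (Fin 3) ℤ, M = Tᵀ * T := by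
  induction hm : (M 0 0).toNat using Nat.strong_induction_on generalizing M with
  | _ m ih =>
    obtain ⟨U, hU, h00, h01, h11⟩ := exists_det_eq_one_hermite_bounds hM (by omega)
    have hpos : 0 < M 0 0 := hM.diag_pos
    rw [hdet, mul_one] at h11
    refine exists_eq_transpose_mul_self_of_congr (U := U) (by simp [hU]) ?_
    have hN : (Uᵀ * M * U).PosDef := by
      have hinj := mulVec_injective_of_isUnit ((isUnit_iff_isUnit_det U).mpr (by simp [hU]))
      rw [← conjTranspose_eq_transpose_of_trivial]
      exact hM.conjTranspose_mul_mul_same hinj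
    have hNdet : (Uᵀ * M * U).det = 1 := by simp [hU, hdet]
    generalize Uᵀ * M * U = N at *
    rcases lt_or_ge (N 1 1) (M 0 0) with hlt | hge
    · let σ := Equiv.swap (0 : Fin 3) 1
      have hpos' : 0 < N 1 1 := hN.diag_pos
      obtain ⟨T, hT⟩ := ih _ (by simp [σ]; omega) (hN.submatrix σ.injective)
        (by rw [det_submatrix_equiv_self, hNdet]) rfl
      refine ⟨T.submatrix id σ.symm, ?_⟩
      ext i j
      simpa [Matrix.mul_apply] using congrFun₂ hT (σ.symm i) (σ.symm j)
    · obtain ⟨ha, hb, hd⟩ := eq_one_of_reduced hpos h01 hge h11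
      exact exists_eq_transpose_mul_self_of_apply_eq (by simpa using hN.isHermitian) hNdet
        (h00.trans ha) hb hd

/-! ### Sums of three squares -/

theorem posDef_of_mul_eq {a b m n x : ℤ} (hm : 0 < m) (hn : 0 < n) (hbn : b * n - 1 = m)
    (ha : x ^ 2 + b = m * a) : !![a, x, 1; x, m, 0; 1, 0, n].PosDef := by
  refine .of_dotProduct_mulVec_pos ?_ fun v hv => ?_
  · ext i j
    fin_cases i <;> fin_cases j <;> rfl
  have hsquares : m * n * (star v ⬝ᵥ !![a, x, 1; x, m, 0; 1, 0, n] *ᵥ v) =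
      v 0 ^ 2 + m * (n * v 2 + v 0) ^ 2 + n * (m * v 1 + x * v 0) ^ 2 := by
    simp only [dotProduct, mulVec, Fin.sum_univ_three, star_trivial, of_apply, cons_val]
    linear_combination v 0 ^ 2 * (-n * ha + hbn)
  refine pos_of_mul_pos_right (hsquares ▸ ?_) (mul_pos hm hn).le
  by_contra! hle
  have hsq0 := sq_nonneg (v 0)
  have hsq1 : 0 ≤ m * (n * v 2 + v 0) ^ 2 := by positivity
  have hsq2 : 0 ≤ n * (m * v 1 + x * v 0) ^ 2 := by positivity
  have h0 : v 0 = 0 := by rw [← sq_eq_zero_iff]; linarith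
  have h1 : v 1 = 0 := by
    have : n * (m * v 1 + x * v 0) ^ 2 = 0 := by linarith
    simpa [h0, hm.ne', hn.ne'] using this
  have h2 : v 2 = 0 := by
    have : m * (n * v 2 + v 0) ^ 2 = 0 := by linarith
    simpa [h0, hm.ne', hn.ne'] using this
  apply hv
  ext i
  fin_cases i
  exacts [h0, h1, h2]

theorem exists_eq_sum_three_sq_of_dvd {n b x : ℤ} (hb : 0 < b) (hbn : 1 < b * n)
    (hx : b * n - 1 ∣ x ^ 2 + b) : ∃ u v w : ℤ, n = u ^ 2 + v ^ 2 + w ^ 2 := by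
  obtain ⟨a, ha⟩ := hx
  have hn : 0 < n := pos_of_mul_pos_right (by omega) hb.le
  have hM := posDef_of_mul_eq (by omega) hn rfl ha
  obtain ⟨T, hT⟩ := exists_eq_transpose_mul_self hM (by
    simp only [det_fin_three, of_apply, cons_val]
    linear_combination -n * ha)
  refine ⟨T 0 2, T 1 2, T 2 2, ?_⟩
  simpa [Matrix.mul_apply, Fin.sum_univ_three, sq] using congrFun₂ hT 2 2

theorem exists_two_mul_dvd_sq_add {q : ℕ} [Fact q.Prime] (hq : Odd q) {b : ℤ} (hb : Odd b)
    (h : J(-b | q) = 1) : ∃ x : ℤ, (2 * q : ℤ) ∣ x ^ 2 + b := by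
  obtain ⟨y, hy⟩ := ZMod.isSquare_of_jacobiSym_eq_one h
  obtain ⟨y, rfl⟩ := ZMod.intCast_surjective y
  have hqy : (q : ℤ) ∣ y ^ 2 + b := by
    rw [← ZMod.intCast_zmod_eq_zero_iff_dvd]
    push_cast at hy ⊢
    linear_combination -hy
  have hcop : IsCoprime (2 : ℤ) q := Int.isCoprime_two_left.mpr (by exact_mod_cast hq)
  obtain ⟨x, hxodd, hx⟩ : ∃ x : ℤ, Odd x ∧ (q : ℤ) ∣ x ^ 2 + b := by
    rcases Int.even_or_odd y with hev | hodd
    · refine ⟨y + q, hev.add_odd (by exact_mod_cast hq), ?_⟩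
      rw [show (y + q) ^ 2 + b = y ^ 2 + b + q * (2 * y + q) by ring]
      exact hqy.add (dvd_mul_right _ _)
    · exact ⟨y, hodd, hqy⟩
  exact ⟨x, hcop.mul_dvd (hxodd.pow.add_odd hb).two_dvd hx⟩

theorem jacobiSym_neg_natCast_eq {b q : ℕ} (hb : Odd b) (hq : Odd q) (h : q % 4 = 1 ∨ b % 4 = 3) :
    J(-b | q) = J(q | b) := by
  rw [jacobiSym.neg _ hq]
  rcases Nat.odd_mod_four_iff.mp (Nat.odd_iff.mp hq) with hq4 | hq4
  · rw [ZMod.χ₄_nat_one_mod_four hq4, one_mul, jacobiSym.quadratic_reciprocity_one_mod_four' hb hq4]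
  · have hb4 : b % 4 = 3 := by omega
    rw [ZMod.χ₄_nat_three_mod_four hq4, jacobiSym.quadratic_reciprocity_three_mod_four hb4 hq4,
      neg_one_mul, neg_neg]

theorem exists_eq_sum_three_sq_of_prime {n b j q : ℕ} (hj : j ∣ 2) (hq : q.Prime) (hqodd : Odd q)
    (hb : Odd b) (h : b * n = j * q + 1) (hmod : q % 4 = 1 ∨ b % 4 = 3) (hjb : J(-j | b) = 1) :
    ∃ u v w : ℤ, (n : ℤ) = u ^ 2 + v ^ 2 + w ^ 2 := by
  have : Fact q.Prime := ⟨hq⟩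
  have h' : (b * n : ℤ) = j * q + 1 := by exact_mod_cast h
  have hqb : J(q | b) = 1 := by
    have hone : J(-j * q | b) = 1 := by
      rw [← jacobiSym.one_left b]
      exact jacobiSym.mod_left' (Int.modEq_iff_dvd.mpr ⟨n, by linarith⟩)
    rwa [jacobiSym.mul_left, hjb, one_mul] at hone
  obtain ⟨x, hx⟩ := exists_two_mul_dvd_sq_add hqodd (b := b) (by exact_mod_cast hb)
    ((jacobiSym_neg_natCast_eq hb hqodd hmod).trans hqb)
  refine exists_eq_sum_three_sq_of_dvd (b := b) (x := x) (by exact_mod_cast hb.pos) ?_ ?_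
  · have hj0 : 0 < j := Nat.pos_of_dvd_of_pos hj two_pos
    have : 0 < (j * q : ℤ) := by exact_mod_cast Nat.mul_pos hj0 hq.pos
    linarith
  · rw [h', add_sub_cancel_right]
    exact (mul_dvd_mul_right (by exact_mod_cast hj) _).trans hx

theorem exists_prime_of_mul_eq {c j m n : ℕ} (hm : Odd m) (h : c * n = j * m + 1) :
    ∃ b q : ℕ, q.Prime ∧ b * n = j * q + 1 ∧ b ≡ c [MOD 4 * j] ∧ q ≡ m [MOD 4] := by
  have hn : n ≠ 0 := by rintro rfl; simp at h
  have hcop : m.Coprime (4 * n) := by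
    refine .mul_right (hm.coprime_two_right.pow_right 2) (Nat.eq_one_of_dvd_one ?_)
    exact (Nat.dvd_add_right ((Nat.gcd_dvd_left m n).mul_left j)).mp
      (h ▸ (Nat.gcd_dvd_right m n).mul_left c)
  obtain ⟨q, hmq, hq, hqm⟩ := Nat.forall_exists_prime_gt_and_modEq m (by omega) hcop
  obtain ⟨v, hv⟩ := (Nat.modEq_iff_dvd' hmq.le).mp hqm.symm
  obtain rfl : q = m + 4 * n * v := by omega
  refine ⟨c + 4 * j * v, _, hq, ?_, ?_, ?_⟩
  · linear_combination h
  · simp [Nat.ModEq]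
  · simp [Nat.ModEq, mul_assoc]

theorem exists_eq_sum_three_sq_of_mul_eq {n c j m : ℕ} (hj : j ∣ 2) (hc : Odd c) (hm : Odd m)
    (h : c * n = j * m + 1) (hmod : m % 4 = 1 ∨ c % 4 = 3) (hjc : J(-j | c) = 1) :
    ∃ u v w : ℤ, (n : ℤ) = u ^ 2 + v ^ 2 + w ^ 2 := by
  obtain ⟨b, q, hq, hbq, hbc, hqm⟩ := exists_prime_of_mul_eq hm h
  have hbc4 : b % 4 = c % 4 := hbc.of_mul_right j
  have hqm4 : q % 4 = m % 4 := hqm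
  rw [Nat.odd_iff] at hc hm
  have hb : Odd b := by rw [Nat.odd_iff]; omega
  refine exists_eq_sum_three_sq_of_prime hj hq (by rw [Nat.odd_iff]; omega) hb hbq (by omega) ?_
  rw [jacobiSym.mod_right _ hb, Int.natAbs_neg, Int.natAbs_natCast, hbc, ← hjc,
    jacobiSym.mod_right _ (Nat.odd_iff.mpr hc), Int.natAbs_neg, Int.natAbs_natCast]

theorem exists_eq_sum_three_sq {n : ℕ} (h4 : n % 4 ≠ 0) (h8 : n % 8 ≠ 7) :
    ∃ u v w : ℤ, (n : ℤ) = u ^ 2 + v ^ 2 + w ^ 2 := by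
  obtain h2 | h3 | h1 : n % 4 = 2 ∨ n % 8 = 3 ∨ n % 4 = 1 := by omega
  · exact exists_eq_sum_three_sq_of_mul_eq (c := 1) (j := 1) (m := n - 1) (one_dvd 2) odd_one
      (by rw [Nat.odd_iff]; omega) (by omega) (by omega) (by simp)
  · exact exists_eq_sum_three_sq_of_mul_eq (c := 1) (j := 2) (m := (n - 1) / 2) dvd_rfl odd_one
      (by rw [Nat.odd_iff]; omega) (by omega) (by omega) (by simp)
  · exact exists_eq_sum_three_sq_of_mul_eq (c := 3) (j := 2) (m := (3 * n - 1) / 2) dvd_rfl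
      (by decide) (by rw [Nat.odd_iff]; omega) (by omega) (by omega) (by norm_num)

/-! ### Representations of primes -/

theorem exists_eq_sq_add_sq_add_five_mul_sq_of_dvd {n u v w : ℤ} (hw : 5 ∣ w)
    (huv : 5 ∣ v - 2 * u ∨ 5 ∣ v + 2 * u) (h : 5 * n = u ^ 2 + v ^ 2 + w ^ 2) :
    ∃ x y z : ℤ, n = x ^ 2 + y ^ 2 + 5 * z ^ 2 := by
  obtain ⟨z, rfl⟩ := hw
  rcases huv with ⟨t, ht⟩ | ⟨t, ht⟩
  · obtain rfl : v = 5 * t + 2 * u := by linarith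
    exact ⟨u + 2 * t, t, z, by linarith⟩
  · obtain rfl : v = 5 * t - 2 * u := by linarith
    exact ⟨u - 2 * t, t, z, by linarith⟩

theorem exists_eq_sq_add_sq_add_five_mul_sq_of_five_mul {n u v w : ℤ}
    (h : 5 * n = u ^ 2 + v ^ 2 + w ^ 2) : ∃ x y z : ℤ, n = x ^ 2 + y ^ 2 + 5 * z ^ 2 := by
  have hmod : ∀ a b c : ZMod 5, a ^ 2 + b ^ 2 + c ^ 2 = 0 →
      (c = 0 ∧ (b - 2 * a = 0 ∨ b + 2 * a = 0)) ∨ (b = 0 ∧ (c - 2 * a = 0 ∨ c + 2 * a = 0)) ∨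
        (a = 0 ∧ (c - 2 * b = 0 ∨ c + 2 * b = 0)) := by decide
  have h0 : (u : ZMod 5) ^ 2 + v ^ 2 + w ^ 2 = 0 := by
    exact_mod_cast (ZMod.intCast_zmod_eq_zero_iff_dvd _ 5).mpr ⟨n, h.symm⟩
  have hdvd := hmod u v w h0
  norm_cast at hdvd
  simp only [ZMod.intCast_zmod_eq_zero_iff_dvd] at hdvd
  obtain ⟨hw, huv⟩ | ⟨hv, huw⟩ | ⟨hu, hvw⟩ := hdvd
  · exact exists_eq_sq_add_sq_add_five_mul_sq_of_dvd hw huv h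
  · exact exists_eq_sq_add_sq_add_five_mul_sq_of_dvd hv huw (by linarith)
  · exact exists_eq_sq_add_sq_add_five_mul_sq_of_dvd hu hvw (by linarith)

theorem exists_eq_sq_add_sq_add_five_mul_sq {n : ℕ} (h4 : n % 4 ≠ 0) (h8 : n % 8 ≠ 3) :
    ∃ x y z : ℤ, (n : ℤ) = x ^ 2 + y ^ 2 + 5 * z ^ 2 := by
  obtain ⟨u, v, w, h⟩ := exists_eq_sum_three_sq (n := 5 * n) (by omega) (by omega)
  exact exists_eq_sq_add_sq_add_five_mul_sq_of_five_mul (by exact_mod_cast h)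

theorem exists_eq_norm_add_five_mul_norm {n : ℕ} (h4 : n % 4 ≠ 0) (hn : 17 < n) :
    ∃ α β : ℤ[i], β ≠ 0 ∧ (n : ℤ) = α.norm + 5 * β.norm := by
  obtain ⟨w, hw, m, hm4, hm8, hnm⟩ : ∃ w : ℕ, w ≠ 0 ∧
      ∃ m : ℕ, m % 4 ≠ 0 ∧ m % 8 ≠ 3 ∧ n = m + 5 * w ^ 2 := by
    by_cases h1 : n % 4 = 1
    · exact ⟨2, two_ne_zero, n - 20, by omega, by omega, by omega⟩
    · exact ⟨1, one_ne_zero, n - 5, by omega, by omega, by omega⟩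
  obtain ⟨x, y, z, hxyz⟩ := exists_eq_sq_add_sq_add_five_mul_sq hm4 hm8
  refine ⟨⟨x, y⟩, ⟨z, w⟩, by simp [Zsqrtd.ext_iff, hw], ?_⟩
  simp only [hnm, Zsqrtd.norm_def]
  push_cast
  linarith

theorem one_add_I_dvd_of_even_norm {γ : ℤ[i]} (h : Even γ.norm) : (⟨1, 1⟩ : ℤ[i]) ∣ γ := by
  obtain ⟨s, hs⟩ : Even (γ.re + γ.im) := by
    simpa [Zsqrtd.norm_def, Int.even_add, Int.even_mul] using h
  exact ⟨⟨s, s - γ.re⟩, Zsqrtd.ext (by simp) (by simp; omega)⟩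

theorem exists_mul_norm_add_mul_norm_eq_prime {p : ℕ} (hp : p.Prime) (hp2 : p ≠ 2) (hp3 : p ≠ 3)
    (hp5 : p ≠ 5) (hp17 : p ≠ 17) : ∃ (m₁ m₂ : ℤ) (α β : ℤ[i]), 0 < m₁ ∧ 0 < m₂ ∧ m₁ * m₂ = 10 ∧
      α ≠ 0 ∧ β ≠ 0 ∧ m₁ * α.norm + m₂ * β.norm = p := by
  obtain ⟨γ, δ, hδ, h⟩ : ∃ γ δ : ℤ[i], δ ≠ 0 ∧ (p : ℤ) = γ.norm + 5 * δ.norm := by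
    rcases lt_or_ge 17 p with hlt | hle
    · have hodd := hp.eq_two_or_odd
      exact exists_eq_norm_add_five_mul_norm (by omega) hlt
    · obtain rfl | rfl | rfl : p = 7 ∨ p = 11 ∨ p = 13 := by
        interval_cases p <;> simp_all +decide
      · exact ⟨⟨1, 1⟩, ⟨1, 0⟩, by decide, by decide⟩
      · exact ⟨⟨1, 0⟩, ⟨1, 1⟩, by decide, by decide⟩
      · exact ⟨⟨2, 2⟩, ⟨1, 0⟩, by decide, by decide⟩
  have hγ : γ ≠ 0 := by
    rintro rfl
    have hdvd : 5 ∣ p := Int.natCast_dvd_natCast.mp ⟨δ.norm, by simpa using h⟩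
    exact hp5 ((Nat.prime_dvd_prime_iff_eq Nat.prime_five hp).mp hdvd).symm
  have hodd : Odd (p : ℤ) := by exact_mod_cast hp.odd_of_ne_two hp2
  rcases Int.even_or_odd δ.norm with hev | hδodd
  · obtain ⟨β, rfl⟩ := one_add_I_dvd_of_even_norm hev
    have hnorm : (p : ℤ) = γ.norm + 5 * (2 * β.norm) := by rw [h, Zsqrtd.norm_mul]; rfl
    exact ⟨1, 10, γ, β, by simp, by simp, by simp, hγ, right_ne_zero_of_mul hδ, by linarith⟩
  · have hev : Even γ.norm := by grind
    obtain ⟨α, rfl⟩ := one_add_I_dvd_of_even_norm hev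
    have hnorm : (p : ℤ) = 2 * α.norm + 5 * δ.norm := by rw [h, Zsqrtd.norm_mul]; rfl
    exact ⟨2, 5, α, δ, by simp, by simp, by simp, right_ne_zero_of_mul hγ, hδ, by linarith⟩

/-! ### Similitudes of ternary forms -/

/-- The form `⟨1, 1, N⟩`, with its first two variables bundled into a Gaussian integer. -/
def ternaryForm (N : ℤ) (v : ℤ[i] × ℤ) : ℤ := v.1.norm + N * v.2 ^ 2

/-- A similitude of `⟨1, 1, m₁m₂⟩` with multiplier `(m₁|α|² + m₂|β|²)²`. -/
def ternarySimilitude (m₁ m₂ : ℤ) (α β : ℤ[i]) (v : ℤ[i] × ℤ) : ℤ[i] × ℤ :=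
  (m₁ * α ^ 2 * v.1 - m₂ * β ^ 2 * star v.1 - 2 * m₁ * m₂ * α * β * v.2,
    (m₁ * α.norm - m₂ * β.norm) * v.2 + 2 * (α * star β * v.1).re)

theorem ternaryForm_mk (N x y z : ℤ) : ternaryForm N (⟨x, y⟩, z) = x ^ 2 + y ^ 2 + N * z ^ 2 := by
  rw [ternaryForm, Zsqrtd.norm_def]
  ring

theorem ternaryForm_ternarySimilitude (m₁ m₂ : ℤ) (α β : ℤ[i]) (v : ℤ[i] × ℤ) :
    ternaryForm (m₁ * m₂) (ternarySimilitude m₁ m₂ α β v) =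
      (m₁ * α.norm + m₂ * β.norm) ^ 2 * ternaryForm (m₁ * m₂) v := by
  obtain ⟨⟨x, y⟩, z⟩ := v
  simp only [ternaryForm, ternarySimilitude, sq, Zsqrtd.norm_def, Zsqrtd.star_mk, Zsqrtd.re_mul,
    Zsqrtd.im_mul, Zsqrtd.re_star, Zsqrtd.im_star, Zsqrtd.re_sub, Zsqrtd.im_sub, Zsqrtd.re_intCast,
    Zsqrtd.im_intCast, Zsqrtd.re_ofNat, Zsqrtd.im_ofNat, Nat.cast_ofNat]
  ring

theorem intCast_dvd_of_dvd_mul_left {p : ℤ} (hp : Prime p) {α ξ : ℤ[i]} (hα : ¬ p ∣ α.norm)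
    (h : (p : ℤ[i]) ∣ α * ξ) : (p : ℤ[i]) ∣ ξ := by
  have hnorm : (p : ℤ[i]) ∣ (α.norm : ℤ[i]) * ξ := by
    rw [Zsqrtd.norm_eq_mul_conj, mul_comm α, mul_assoc]
    exact h.mul_left _
  rw [Zsqrtd.intCast_dvd] at hnorm ⊢
  simp only [Zsqrtd.re_smul, Zsqrtd.im_smul, hp.dvd_mul, hα, false_or] at hnorm
  exact hnorm

section Similitude

variable {p m₁ m₂ : ℤ} {α β : ℤ[i]}

theorem exists_not_dvd_ternarySimilitude (hp : Prime p) (hodd : Odd p)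
    (hdvd : p ∣ m₁ * α.norm + m₂ * β.norm) (hα : ¬ p ∣ m₁ * α.norm) {v : ℤ[i] × ℤ}
    (hv : ¬ (p : ℤ[i] × ℤ) ∣ v) :
    ∃ γ : ℤ[i], γ.norm = β.norm ∧ ¬ p ∣ (ternarySimilitude m₁ m₂ α γ v).2 := by
  have hβ : ¬ p ∣ m₂ * β.norm := fun h => hα ((dvd_add_left h).mp hdvd)
  contrapose! hv
  have cancel_two {k : ℤ} (h : p ∣ 2 * k) : p ∣ k :=
    (Int.isCoprime_two_right.mpr hodd).dvd_of_dvd_mul_left h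
  obtain ⟨ξ, z⟩ := v
  set w := α * star β * ξ with hw
  set c := m₁ * α.norm - m₂ * β.norm
  -- Replacing `β` by `-β` and by `iβ` replaces `w.re` by `-w.re` and by `w.im`.
  have hplus : p ∣ c * z + 2 * w.re := hv β rfl
  have hminus : p ∣ c * z + 2 * -w.re := by
    have hre : (α * star (-β) * ξ).re = -w.re := by simp [hw]
    simpa only [ternarySimilitude, Zsqrtd.norm_neg, hre] using hv (-β) (Zsqrtd.norm_neg β)
  have hrot : p ∣ c * z + 2 * w.im := by
    have hnorm : (⟨0, 1⟩ * β : ℤ[i]).norm = β.norm := by rw [Zsqrtd.norm_mul]; exact one_mul _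
    have hre : (α * star (⟨0, 1⟩ * β) * ξ).re = w.im := by
      simp only [hw, Zsqrtd.re_mul, Zsqrtd.im_mul, Zsqrtd.re_star, Zsqrtd.im_star]
      ring
    simpa only [ternarySimilitude, hnorm, hre] using hv (⟨0, 1⟩ * β) hnorm
  have hz : p ∣ z := by
    have hsum : c * z + 2 * w.re + (c * z + 2 * -w.re) +
        2 * z * (m₁ * α.norm + m₂ * β.norm) = 2 * (2 * (m₁ * α.norm * z)) := by ring
    have h4 := hsum ▸ (hplus.add hminus).add (hdvd.mul_left (2 * z))
    exact (hp.dvd_or_dvd (cancel_two (cancel_two h4))).resolve_left hα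
  have hcz : p ∣ c * z := hz.mul_left c
  have hre : p ∣ w.re := cancel_two ((dvd_add_right hcz).mp hplus)
  have him : p ∣ w.im := cancel_two ((dvd_add_right hcz).mp hrot)
  have hξ : (p : ℤ[i]) ∣ ξ := by
    refine intCast_dvd_of_dvd_mul_left hp (α := α * star β) ?_
      ((Zsqrtd.intCast_dvd p w).mpr ⟨hre, him⟩)
    rw [Zsqrtd.norm_mul, Zsqrtd.norm_conj, hp.dvd_mul]
    exact not_or.mpr ⟨fun h => hα (h.mul_left _), fun h => hβ (h.mul_left _)⟩
  exact prod_dvd_iff.mpr ⟨hξ, by simpa using hz⟩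

theorem ternaryForm_intCast_mul (N p : ℤ) (v : ℤ[i] × ℤ) :
    ternaryForm N (p * v) = p ^ 2 * ternaryForm N v := by
  simp only [ternaryForm, Prod.fst_mul, Prod.snd_mul, Prod.fst_intCast, Prod.snd_intCast,
    Zsqrtd.norm_mul, Zsqrtd.norm_intCast, Int.cast_eq]
  ring

theorem exists_not_dvd_ternaryForm_eq_of_not_dvd (hp : Prime p) (hodd : Odd p) (hm₁ : 0 < m₁)
    (hm₂ : 0 < m₂) (hα : α ≠ 0) (hβ : β ≠ 0) (h : m₁ * α.norm + m₂ * β.norm = p) {v : ℤ[i] × ℤ}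
    (hv : ¬ (p : ℤ[i] × ℤ) ∣ v) : ∃ w, ¬ (p : ℤ[i] × ℤ) ∣ w ∧
      ternaryForm (m₁ * m₂) w = p ^ 2 * ternaryForm (m₁ * m₂) v := by
  have hα0 := mul_pos hm₁ (GaussianInt.norm_pos.mpr hα)
  have hβ0 := mul_pos hm₂ (GaussianInt.norm_pos.mpr hβ)
  obtain ⟨γ, hγ, hdvd⟩ := exists_not_dvd_ternarySimilitude hp hodd h.symm.dvd
    (fun hdvd => by linarith [Int.le_of_dvd hα0 hdvd]) hv
  refine ⟨ternarySimilitude m₁ m₂ α γ v, fun h => hdvd ?_, ?_⟩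
  · simpa using (prod_dvd_iff.mp h).2
  · rw [ternaryForm_ternarySimilitude, hγ, h]

theorem exists_not_dvd_ternaryForm_eq (hp : Prime p) (hodd : Odd p) (hm₁ : 0 < m₁)
    (hm₂ : 0 < m₂) (hα : α ≠ 0) (hβ : β ≠ 0) (h : m₁ * α.norm + m₂ * β.norm = p) {v : ℤ[i] × ℤ}
    (hv : 0 < ternaryForm (m₁ * m₂) v) : ∃ w, ¬ (p : ℤ[i] × ℤ) ∣ w ∧
      ternaryForm (m₁ * m₂) w = p ^ 2 * ternaryForm (m₁ * m₂) v := by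
  have lift {u} := exists_not_dvd_ternaryForm_eq_of_not_dvd hp hodd hm₁ hm₂ hα hβ h (v := u)
  induction hn : (ternaryForm (m₁ * m₂) v).toNat using Nat.strong_induction_on generalizing v with
  | _ n ih =>
    by_cases hdvd : (p : ℤ[i] × ℤ) ∣ v
    · obtain ⟨u, rfl⟩ := hdvd
      rw [ternaryForm_intCast_mul] at *
      have hu : 0 < ternaryForm (m₁ * m₂) u := pos_of_mul_pos_right hv (sq_nonneg p)
      have hp1 : 1 < |p| := by
        rw [Int.abs_eq_natAbs]
        exact_mod_cast (Int.prime_iff_natAbs_prime.mp hp).one_lt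
      have hlt : ternaryForm (m₁ * m₂) u < p ^ 2 * ternaryForm (m₁ * m₂) u :=
        lt_mul_of_one_lt_left hu ((one_lt_sq_iff_one_lt_abs p).mpr hp1)
      obtain ⟨w, hw, hwu⟩ := ih _ (by omega) hu rfl
      rw [← hwu]
      exact lift hw
    · exact lift hdvd

/-- The identification `(x, y, z) ↦ (x + iy, z)` of `ℤ³` with `ℤ[i] × ℤ`. -/
def gaussianIntProdEquiv : ℤ × ℤ × ℤ ≃ ℤ[i] × ℤ where
  toFun v := (⟨v.1, v.2.1⟩, v.2.2)
  invFun v := (v.1.re, v.1.im, v.2)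
  left_inv _ := rfl
  right_inv _ := rfl

theorem finite_setOf_ternaryForm_eq {N : ℤ} (hN : 0 < N) (n : ℤ) :
    {v | ternaryForm N v = n}.Finite := by
  have hbound {x : ℤ} (h : x ^ 2 ≤ n) : x ∈ Set.Icc (-n) n :=
    abs_le.mp ((Int.le_self_sq |x|).trans (by rwa [sq_abs]))
  refine (((Set.finite_Icc (-n) n).prod ((Set.finite_Icc (-n) n).prod
    (Set.finite_Icc (-n) n))).preimage gaussianIntProdEquiv.symm.injective.injOn).subset ?_
  rintro ⟨⟨x, y⟩, z⟩ rfl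
  have hform := ternaryForm_mk N x y z
  have hz : z ^ 2 ≤ N * z ^ 2 := le_mul_of_one_le_left (sq_nonneg z) hN
  have hx0 := sq_nonneg x
  have hy0 := sq_nonneg y
  have hz0 := sq_nonneg z
  exact ⟨hbound (show x ^ 2 ≤ _ by linarith), hbound (show y ^ 2 ≤ _ by linarith),
    hbound (show z ^ 2 ≤ _ by linarith)⟩

theorem ncard_ternaryForm_lt (hp : Prime p) (hodd : Odd p) (hm₁ : 0 < m₁)
    (hm₂ : 0 < m₂) (hα : α ≠ 0) (hβ : β ≠ 0) (h : m₁ * α.norm + m₂ * β.norm = p) {v : ℤ[i] × ℤ}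
    (hv : 0 < ternaryForm (m₁ * m₂) v) :
    {u | ternaryForm (m₁ * m₂) u = ternaryForm (m₁ * m₂) v}.ncard <
      {u | ternaryForm (m₁ * m₂) u = p ^ 2 * ternaryForm (m₁ * m₂) v}.ncard := by
  obtain ⟨w, hw, hwv⟩ := exists_not_dvd_ternaryForm_eq hp hodd hm₁ hm₂ hα hβ h hv
  have hinj : Function.Injective fun u : ℤ[i] × ℤ => (p : ℤ[i] × ℤ) * u := fun u u' huu' =>
    Prod.ext (mul_left_cancel₀ (Int.cast_ne_zero.mpr hp.ne_zero) (congrArg Prod.fst huu'))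
      (mul_left_cancel₀ (Int.cast_ne_zero.mpr hp.ne_zero) (congrArg Prod.snd huu'))
  rw [← Set.ncard_image_of_injective _ hinj]
  refine Set.ncard_lt_ncard ?_ (finite_setOf_ternaryForm_eq (mul_pos hm₁ hm₂) _)
  refine (Set.ssubset_iff_of_subset ?_).mpr ⟨w, hwv, ?_⟩
  · rintro _ ⟨u, hu, rfl⟩
    exact (ternaryForm_intCast_mul _ p u).trans (congrArg (p ^ 2 * ·) hu)
  · rintro ⟨u, -, rfl⟩
    exact hw (dvd_mul_right _ u)

end Similitude

theorem ramanujanRepCount_eq_ncard (n : ℤ) :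
    ramanujanRepCount n = {v | ternaryForm 10 v = n}.ncard := by
  rw [ramanujanRepCount, ← Set.ncard_preimage_of_injective_subset_range
    gaussianIntProdEquiv.injective (by simp [gaussianIntProdEquiv.surjective.range_eq])]
  congr 1
  ext v
  exact Eq.congr_left (ternaryForm_mk 10 v.1 v.2.1 v.2.2).symm

theorem ramanujan_rep_growth (p : ℕ) (hp : p.Prime)
    (hp2 : p ≠ 2) (hp3 : p ≠ 3) (hp5 : p ≠ 5) (hp17 : p ≠ 17)
    (n : ℤ) (hn : 0 < n)
    (hrep : ∃ x y z : ℤ, x ^ 2 + y ^ 2 + 10 * z ^ 2 = n)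
    (hrep2 : ∃ x y z : ℤ, x ^ 2 + y ^ 2 + 10 * z ^ 2 = (p : ℤ) ^ 2 * n) :
    ramanujanRepCount n < ramanujanRepCount ((p : ℤ) ^ 2 * n) := by
  obtain ⟨m₁, m₂, α, β, hm₁, hm₂, hm, hα, hβ, h⟩ :=
    exists_mul_norm_add_mul_norm_eq_prime hp hp2 hp3 hp5 hp17
  obtain ⟨x, y, z, hxyz⟩ := hrep
  have hv : ternaryForm (m₁ * m₂) (⟨x, y⟩, z) = n := by
    rw [hm, ternaryForm_mk, hxyz]
  have hlt := ncard_ternaryForm_lt (Nat.prime_iff_prime_int.mp hp)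
    (by exact_mod_cast hp.odd_of_ne_two hp2) hm₁ hm₂ hα hβ h (hv ▸ hn)
  rwa [hv, hm, ← ramanujanRepCount_eq_ncard, ← ramanujanRepCount_eq_ncard] at hlt
end
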